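/- arXiv:quant-ph/0006128 — 4 statements merged into one kernel-verified Lean document; each statement's English description precedes it below -/
import Mathlib

section
/- Let σ₁ ≥ σ₂ ≥ ... ≥ σ_n ≥ 0 be nonnegative reals with n ≥ 1. Then there exists a complex symmetric n×n matrix with singular values σ₁,...,σ_n and all diagonal entries of modulus equal to c/n for c = max(0, σ₁ − ∑_{i≥2} σ_i)... more weakly: for any complex symmetric n×n matrix S with singular values σ₁ ≥ ... ≥ σ_n, the sum of moduli of its diagonal entries satisfies ∑_i |S_{ii}| ≥ σ₁ − ∑_{i=2}^n σ_i. -/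
open Matrix Finset

/-!
Let `S = U D V` with `D = diagonal d`. Expanding the diagonal entries of `S`, the `k`-th summand
contributes `‖d k‖ ∑ i, ‖U i k‖ ‖V k i‖` to `∑ i, ‖S i i‖`, and by Cauchy–Schwarz the `j`-th one
takes away at most `‖d j‖`. So it is enough that `‖V k i‖ = ‖U i k‖` for all `i`, because the
columns of `U` are unit vectors. This equality is where symmetry enters: the unitary matrix
`A = Uᴴ Vᵀ` satisfies `(A D)ᵀ = A D`, so if `‖d k‖` strictly exceeds every other `‖d j‖`, comparing
the norms of row `k` and of column `k` of `A D` shows that `A` vanishes off the diagonal in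
column `k`. If `‖d k‖` is not strictly largest, the lower bound is at most `0`.
-/

section

variable {ι 𝕜 : Type*} [Fintype ι] [DecidableEq ι]

theorem norm_mul_sum_sub_le_sum_norm_diag {m : Type*} [Fintype m] [NormedRing 𝕜] [NormMulClass 𝕜]
    (U : Matrix m ι 𝕜) (d : ι → 𝕜) (V : Matrix ι m 𝕜) (k : ι) :
    ‖d k‖ * ∑ i, ‖U i k‖ * ‖V k i‖ - ∑ j ∈ univ.erase k, ‖d j‖ * ∑ i, ‖U i j‖ * ‖V j i‖ ≤
      ∑ i, ‖(U * diagonal d * V) i i‖ := by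
  have expand (i : m) : (U * diagonal d * V) i i =
      U i k * d k * V k i + ∑ j ∈ univ.erase k, U i j * d j * V j i := by
    rw [add_sum_erase _ (fun j => U i j * d j * V j i) (mem_univ k), mul_apply]
    simp only [mul_diagonal]
  have norm_term (i : m) (j : ι) : ‖U i j * d j * V j i‖ = ‖d j‖ * (‖U i j‖ * ‖V j i‖) := by
    rw [norm_mul, norm_mul]
    ring
  have entry_bound (i : m) : ‖d k‖ * (‖U i k‖ * ‖V k i‖) -
      ∑ j ∈ univ.erase k, ‖d j‖ * (‖U i j‖ * ‖V j i‖) ≤ ‖(U * diagonal d * V) i i‖ := by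
    simp only [← norm_term]
    rw [expand, sub_le_iff_le_add]
    exact (norm_le_add_norm_add _ _).trans (by gcongr; exact norm_sum_le _ _)
  calc _ = ∑ i, (‖d k‖ * (‖U i k‖ * ‖V k i‖) -
        ∑ j ∈ univ.erase k, ‖d j‖ * (‖U i j‖ * ‖V j i‖)) := by
        rw [sum_sub_distrib, sum_comm]
        simp only [mul_sum]
    _ ≤ _ := sum_le_sum fun i _ => entry_bound i

theorem isSymm_conjTranspose_mul_transpose_mul_diagonal [CommRing 𝕜] [StarRing 𝕜]
    {U V : Matrix ι ι 𝕜} {d : ι → 𝕜} (hU : U ∈ unitaryGroup ι 𝕜)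
    (hS : (U * diagonal d * V).IsSymm) : (Uᴴ * Vᵀ * diagonal d).IsSymm := by
  have hUU : Uᴴ * U = 1 := mem_unitaryGroup_iff'.1 hU
  have hUU_transpose : Uᵀ * Uᴴᵀ = 1 := by rw [← transpose_mul, hUU, transpose_one]
  have congruence : Uᴴ * Vᵀ * diagonal d = Uᴴ * (U * diagonal d * V) * Uᴴᵀ := by
    rw [← hS.eq, transpose_mul, transpose_mul, diagonal_transpose]
    simp only [Matrix.mul_assoc, hUU_transpose, Matrix.mul_one]
  rw [congruence, IsSymm, transpose_mul, transpose_mul, transpose_transpose, hS.eq,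
    ← Matrix.mul_assoc]

variable [RCLike 𝕜] {U V A : Matrix ι ι 𝕜}

theorem sum_norm_sq_col_of_mem_unitaryGroup (hU : U ∈ unitaryGroup ι 𝕜) (k : ι) :
    ∑ i, ‖U i k‖ ^ 2 = 1 := by
  have h := congrFun₂ (mem_unitaryGroup_iff'.1 hU) k k
  simp only [mul_apply, star_apply, RCLike.star_def, RCLike.conj_mul, one_apply_eq] at h
  exact_mod_cast h

theorem sum_norm_sq_row_of_mem_unitaryGroup (hU : U ∈ unitaryGroup ι 𝕜) (k : ι) :
    ∑ i, ‖U k i‖ ^ 2 = 1 :=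
  sum_norm_sq_col_of_mem_unitaryGroup (transpose_mem_unitaryGroup_iff.2 hU) k

theorem sum_norm_mul_norm_le_one (hU : U ∈ unitaryGroup ι 𝕜) (hV : V ∈ unitaryGroup ι 𝕜)
    (j k : ι) : ∑ i, ‖U i j‖ * ‖V k i‖ ≤ 1 := by
  have cauchy_schwarz := sum_mul_sq_le_sq_mul_sq univ (fun i => ‖U i j‖) (fun i => ‖V k i‖)
  rw [sum_norm_sq_col_of_mem_unitaryGroup hU, sum_norm_sq_row_of_mem_unitaryGroup hV,
    one_mul] at cauchy_schwarz
  exact (sq_le_one_iff₀ (by positivity)).1 cauchy_schwarz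

theorem apply_eq_zero_of_isSymm_mul_diagonal {d : ι → 𝕜} {j k : ι} (hA : A ∈ unitaryGroup ι 𝕜)
    (hsymm : (A * diagonal d).IsSymm) (hd : ∀ i ≠ k, ‖d i‖ < ‖d k‖) (hj : j ≠ k) :
    A j k = 0 := by
  have entry_symm (i : ι) : A i k * d k = A k i * d i := by
    simpa only [mul_diagonal] using hsymm.apply k i
  have norm_entry_symm (i : ι) : ‖A i k‖ ^ 2 * ‖d k‖ ^ 2 = ‖A k i‖ ^ 2 * ‖d i‖ ^ 2 := by
    simp only [← mul_pow, ← norm_mul, entry_symm]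
  have row_deficit : ∑ i, ‖A k i‖ ^ 2 * (‖d k‖ ^ 2 - ‖d i‖ ^ 2) = 0 := by
    simp only [mul_sub, ← norm_entry_symm, sum_sub_distrib, ← sum_mul,
      sum_norm_sq_row_of_mem_unitaryGroup hA, sum_norm_sq_col_of_mem_unitaryGroup hA, sub_self]
  have deficit_pos {i : ι} (hi : i ≠ k) : 0 < ‖d k‖ ^ 2 - ‖d i‖ ^ 2 :=
    sub_pos.2 (pow_lt_pow_left₀ (hd i hi) (norm_nonneg _) two_ne_zero)
  have deficit_nonneg (i : ι) : 0 ≤ ‖A k i‖ ^ 2 * (‖d k‖ ^ 2 - ‖d i‖ ^ 2) := by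
    rcases eq_or_ne i k with rfl | hi
    · simp
    · exact mul_nonneg (sq_nonneg _) (deficit_pos hi).le
  have row_zero : A k j = 0 := by
    have h := (sum_eq_zero_iff_of_nonneg fun i _ => deficit_nonneg i).1 row_deficit j (mem_univ j)
    simpa using (mul_eq_zero.1 h).resolve_right (deficit_pos hj).ne'
  have dk_ne_zero : d k ≠ 0 := norm_pos_iff.1 ((norm_nonneg _).trans_lt (hd j hj))
  simpa [row_zero, dk_ne_zero] using entry_symm j

theorem norm_row_eq_norm_col_of_isSymm {d : ι → 𝕜} {k : ι} (hU : U ∈ unitaryGroup ι 𝕜)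
    (hV : V ∈ unitaryGroup ι 𝕜) (hS : (U * diagonal d * V).IsSymm)
    (hd : ∀ j ≠ k, ‖d j‖ < ‖d k‖) (i : ι) : ‖V k i‖ = ‖U i k‖ := by
  set A := Uᴴ * Vᵀ with hA_def
  have hA : A ∈ unitaryGroup ι 𝕜 :=
    mul_mem (Unitary.star_mem hU) (transpose_mem_unitaryGroup_iff.2 hV)
  have col_zero (j : ι) (hj : j ≠ k) : A j k = 0 :=
    apply_eq_zero_of_isSymm_mul_diagonal hA
      (isSymm_conjTranspose_mul_transpose_mul_diagonal hU hS) hd hj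
  have norm_diag : ‖A k k‖ = 1 := by
    have h := sum_norm_sq_col_of_mem_unitaryGroup hA k
    rw [Fintype.sum_eq_single k fun j hj => by simp [col_zero j hj]] at h
    exact (pow_eq_one_iff_of_nonneg (norm_nonneg _) two_ne_zero).1 h
  have hUA : Vᵀ = U * A := by
    rw [hA_def, ← Matrix.mul_assoc, ← star_eq_conjTranspose, mem_unitaryGroup_iff.1 hU,
      Matrix.one_mul]
  have entry : V k i = U i k * A k k := by
    rw [← transpose_apply V, hUA, mul_apply, Fintype.sum_eq_single k fun j hj => by
      rw [col_zero j hj, mul_zero]]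
  rw [entry, norm_mul, norm_diag, mul_one]

/-- The entries of `d` may carry phases: the singular values of `S` are the `‖d j‖`. -/
theorem thompson_diag_singular_values_general {S : Matrix ι ι 𝕜} {d : ι → 𝕜} (hS : S.IsSymm)
    (hU : U ∈ unitaryGroup ι 𝕜) (hV : V ∈ unitaryGroup ι 𝕜) (hSVD : S = U * diagonal d * V)
    (k : ι) : ‖d k‖ - ∑ j ∈ univ.erase k, ‖d j‖ ≤ ∑ i, ‖S i i‖ := by
  subst hSVD
  by_cases hd : ∀ j ≠ k, ‖d j‖ < ‖d k‖
  · have leading_sum : ∑ i, ‖U i k‖ * ‖V k i‖ = 1 := by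
      simp only [norm_row_eq_norm_col_of_isSymm hU hV hS hd, ← sq,
        sum_norm_sq_col_of_mem_unitaryGroup hU]
    calc ‖d k‖ - ∑ j ∈ univ.erase k, ‖d j‖
        ≤ ‖d k‖ * ∑ i, ‖U i k‖ * ‖V k i‖ -
            ∑ j ∈ univ.erase k, ‖d j‖ * ∑ i, ‖U i j‖ * ‖V j i‖ := by
          rw [leading_sum, mul_one]
          gcongr with j
          exact mul_le_of_le_one_right (norm_nonneg _) (sum_norm_mul_norm_le_one hU hV j j)
      _ ≤ _ := norm_mul_sum_sub_le_sum_norm_diag U d V k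
  · push Not at hd
    obtain ⟨j, hjk, hle⟩ := hd
    have le_sum : ‖d j‖ ≤ ∑ i ∈ univ.erase k, ‖d i‖ :=
      single_le_sum (fun _ _ => norm_nonneg _) (mem_erase.2 ⟨hjk, mem_univ j⟩)
    exact (sub_nonpos.2 (hle.trans le_sum)).trans (sum_nonneg fun _ _ => norm_nonneg _)

end

/-- Thompson inequality (second family, `k = 1`): for a complex symmetric matrix `S`
with singular values `σ₁ ≥ ⋯ ≥ σ_n ≥ 0`, the moduli of the diagonal entries satisfy
`∑_i |S_{ii}| ≥ σ₁ − ∑_{i≥2} σ_i`. -/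
theorem thompson_diag_singular_values {n : ℕ} [NeZero n]
    (S : Matrix (Fin n) (Fin n) ℂ) (hsymm : Sᵀ = S)
    (σ : Fin n → ℝ) (hσ0 : ∀ i, 0 ≤ σ i) (hσmono : Antitone σ)
    (U V : Matrix (Fin n) (Fin n) ℂ)
    (hU : U ∈ Matrix.unitaryGroup (Fin n) ℂ) (hV : V ∈ Matrix.unitaryGroup (Fin n) ℂ)
    (hSVD : S = U * Matrix.diagonal (fun i => (σ i : ℂ)) * V) :
    σ 0 - ∑ i ∈ Finset.univ.erase 0, σ i ≤ ∑ i, ‖S i i‖ := by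
  simpa [abs_of_nonneg (hσ0 _)] using thompson_diag_singular_values_general hsymm hU hV hSVD 0
end

section
/- Let A be a complex symmetric n×n matrix with singular values σ₁ ≥ ... ≥ σ_n. Define the concurrence C(ρ) = min over all K ≥ n and all n×K matrices T with T T† = I_n of ∑_{k=1}^K |(Tᵀ A T)_{kk}|. Then C(ρ) = max(0, σ₁ − ∑_{i=2}^n σ_i), and the minimum is attained with K = n when σ₁ ≥ ∑_{i≥2} σ_i. -/
open Matrix Finset

/-!
A unitary change of variables and the absorption of phases reduce `A` to `diagonal d` with
`‖d i‖ = σ i` and the arguments of the `d i` at our disposal; the `k`-th summand is then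
`‖∑ i, d i * T i k ^ 2‖`. As the rows of `T` are unit vectors, the triangle inequality gives the
lower bound. If `T` is a normalised matrix of signs, all summands are equal and add up to
`‖∑ i, d i‖`, which for suitable phases is the lower bound: this is the closing of a polygon with
side lengths `σ i`. To attain the bound with a square `T` when `σ₁` dominates, take `d = (σ₁, -σ₂,
…, -σ_n)` and equalise the diagonal by a real orthogonal congruence, which preserves the trace.
-/

variable {ι κ R : Type*}

/-! ### Preconcurrences -/

/-- The sum of the moduli of the preconcurrences `(Tᵀ A T)_{kk}` of the ensemble described by `T`,
the quantity minimised by the concurrence. -/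
noncomputable def preconcurrenceSum [Fintype ι] [Fintype κ] (A : Matrix ι ι ℂ)
    (T : Matrix ι κ ℂ) : ℝ :=
  ∑ k, ‖(Tᵀ * A * T) k k‖

lemma preconcurrenceSum_nonneg [Fintype ι] [Fintype κ] (A : Matrix ι ι ℂ) (T : Matrix ι κ ℂ) :
    0 ≤ preconcurrenceSum A T :=
  sum_nonneg fun _ _ ↦ norm_nonneg _

lemma preconcurrenceSum_transpose_mul_mul [Fintype ι] [Fintype κ] {m : Type*} [Fintype m]
    (A : Matrix m m ℂ) (V : Matrix m ι ℂ) (T : Matrix ι κ ℂ) :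
    preconcurrenceSum (Vᵀ * A * V) T = preconcurrenceSum A (V * T) := by
  simp only [preconcurrenceSum, transpose_mul, Matrix.mul_assoc]

lemma mul_mul_conjTranspose_mul_eq_one [Fintype ι] [DecidableEq ι] [Fintype κ] {m : Type*}
    [DecidableEq m] [Semiring R] [StarRing R] {V : Matrix m ι R} {T : Matrix ι κ R}
    (hV : V * Vᴴ = 1) (hT : T * Tᴴ = 1) : (V * T) * (V * T)ᴴ = 1 := by
  rw [conjTranspose_mul, Matrix.mul_assoc, ← Matrix.mul_assoc T, hT, Matrix.one_mul, hV]

lemma transpose_mul_diagonal_mul_apply_self [Fintype ι] [DecidableEq ι] [CommSemiring R]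
    (d : ι → R) (T : Matrix ι κ R) (k : κ) :
    (Tᵀ * diagonal d * T) k k = ∑ i, d i * T i k ^ 2 := by
  rw [mul_apply]
  refine sum_congr rfl fun i _ ↦ ?_
  rw [mul_diagonal, transpose_apply]
  ring

/-! ### The lower bound -/

lemma sum_norm_sq_row_eq_one [DecidableEq ι] [Fintype κ] {T : Matrix ι κ ℂ} (hT : T * Tᴴ = 1)
    (i : ι) : ∑ k, ‖T i k‖ ^ 2 = 1 := by
  have h : (T * Tᴴ) i i = 1 := by rw [hT, one_apply_eq]
  simp only [mul_apply, conjTranspose_apply, Complex.star_def, Complex.mul_conj'] at h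
  exact_mod_cast h

lemma norm_sub_sum_erase_norm_le_norm_sum [Fintype ι] [DecidableEq ι] {E : Type*}
    [SeminormedAddCommGroup E] (f : ι → E) (i₀ : ι) :
    ‖f i₀‖ - ∑ i ∈ univ.erase i₀, ‖f i‖ ≤ ‖∑ i, f i‖ := by
  rw [← add_sum_erase _ _ (mem_univ i₀)]
  exact (sub_le_sub_left (norm_sum_le _ _) _).trans (norm_sub_le_norm_add _ _)

lemma norm_sub_sum_erase_norm_le_preconcurrenceSum_diagonal [Fintype ι] [DecidableEq ι]
    [Fintype κ] (d : ι → ℂ) (i₀ : ι) {T : Matrix ι κ ℂ} (hT : T * Tᴴ = 1) :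
    ‖d i₀‖ - ∑ i ∈ univ.erase i₀, ‖d i‖ ≤ preconcurrenceSum (diagonal d) T := by
  have weight (i : ι) : ∑ k, ‖d i * T i k ^ 2‖ = ‖d i‖ := by
    simp only [norm_mul, norm_pow, ← mul_sum, sum_norm_sq_row_eq_one hT, mul_one]
  calc ‖d i₀‖ - ∑ i ∈ univ.erase i₀, ‖d i‖
      = ∑ k, (‖d i₀ * T i₀ k ^ 2‖ - ∑ i ∈ univ.erase i₀, ‖d i * T i k ^ 2‖) := by
        rw [sum_sub_distrib, sum_comm]
        simp only [weight]
    _ ≤ ∑ k, ‖∑ i, d i * T i k ^ 2‖ :=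
        sum_le_sum fun k _ ↦ norm_sub_sum_erase_norm_le_norm_sum (fun i ↦ d i * T i k ^ 2) i₀
    _ = preconcurrenceSum (diagonal d) T := by
        simp only [preconcurrenceSum, transpose_mul_diagonal_mul_apply_self]

/-! ### Phases -/

lemma exists_circle_norm_mul_eq (w : ℂ) : ∃ p : Circle, (‖w‖ : ℂ) * p = w :=
  ⟨Circle.exp w.arg, Complex.norm_mul_exp_arg_mul_I w⟩

lemma exists_circle_mul_eq_norm (w : ℂ) : ∃ p : Circle, w * p = ‖w‖ := by
  obtain ⟨p, hp⟩ := exists_circle_norm_mul_eq w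
  exact ⟨p⁻¹, by rw [Circle.coe_inv, mul_inv_eq_iff_eq_mul₀ p.coe_ne_zero, hp]⟩

lemma exists_circle_sq_eq (z : Circle) : ∃ w : Circle, w ^ 2 = z :=
  ⟨Circle.exp ((z : ℂ).arg / 2), by
    rw [← Circle.exp_nsmul, nsmul_eq_mul, Nat.cast_ofNat, mul_div_cancel₀ _ two_ne_zero,
      Circle.exp_arg]⟩

lemma exists_circle_norm_add_mul_eq (w a : ℂ) : ∃ u : Circle, ‖w + a * u‖ = |‖w‖ - ‖a‖| := by
  obtain ⟨p, hp⟩ := exists_circle_norm_mul_eq w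
  obtain ⟨q, hq⟩ := exists_circle_mul_eq_norm a
  refine ⟨-(q * p), ?_⟩
  have opposite : w + a * ↑(-(q * p)) = ((‖w‖ - ‖a‖ : ℝ) : ℂ) * p := by
    push_cast
    linear_combination -hp - p * hq
  rw [opposite, norm_mul, Circle.norm_coe, mul_one, Complex.norm_real, Real.norm_eq_abs]

lemma exists_circle_norm_sum_mul_le {s : Finset ι} {d : ι → ℂ} {r : ℝ}
    (hr : 0 ≤ r) (hd : ∀ i ∈ s, ‖d i‖ ≤ r) : ∃ z : ι → Circle, ‖∑ i ∈ s, d i * z i‖ ≤ r := by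
  classical
  induction s using Finset.induction_on with
  | empty => exact ⟨1, by simpa⟩
  | insert j s hj ih =>
    obtain ⟨z, hz⟩ := ih fun i hi ↦ hd i (mem_insert_of_mem hi)
    obtain ⟨u, hu⟩ := exists_circle_norm_add_mul_eq (∑ i ∈ s, d i * z i) (d j)
    refine ⟨Function.update z j u, ?_⟩
    have unchanged : ∑ i ∈ s, d i * Function.update z j u i = ∑ i ∈ s, d i * z i :=
      sum_congr rfl fun i hi ↦ by rw [Function.update_of_ne (ne_of_mem_of_not_mem hi hj)]
    rw [sum_insert hj, Function.update_self, unchanged, add_comm, hu]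
    exact abs_sub_le_of_nonneg_of_le (norm_nonneg _) hz (norm_nonneg _)
      (hd j (mem_insert_self j s))

-- The torus of phases is connected, so the norm of the sum takes all intermediate values.
lemma exists_circle_norm_sum_mul_eq {s : Finset ι} {d : ι → ℂ} {r : ℝ}
    (hr : 0 ≤ r) (hd : ∀ i ∈ s, ‖d i‖ ≤ r) (hrs : r ≤ ∑ i ∈ s, ‖d i‖) :
    ∃ z : ι → Circle, ‖∑ i ∈ s, d i * z i‖ = r := by
  obtain ⟨z, hz⟩ := exists_circle_norm_sum_mul_le hr hd
  choose p hp using fun i ↦ exists_circle_mul_eq_norm (d i)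
  have hpr : r ≤ ‖∑ i ∈ s, d i * p i‖ := by
    simp only [hp]
    rw [← Complex.ofReal_sum, Complex.norm_real]
    exact hrs.trans (Real.le_norm_self _)
  exact mem_range_of_exists_le_of_exists_ge (f := fun z : ι → Circle ↦ ‖∑ i ∈ s, d i * z i‖)
    (by fun_prop) ⟨z, hz⟩ ⟨p, hpr⟩

lemma exists_circle_norm_sum_mul_eq_max [Fintype ι] [DecidableEq ι] {d : ι → ℂ} {i₀ : ι}
    (hd : ∀ i, ‖d i‖ ≤ ‖d i₀‖) :
    ∃ z : ι → Circle, ‖∑ i, d i * z i‖ = max 0 (‖d i₀‖ - ∑ i ∈ univ.erase i₀, ‖d i‖) := by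
  have hnonneg (i : ι) : 0 ≤ ‖d i‖ := norm_nonneg _
  obtain ⟨z, hz⟩ := exists_circle_norm_sum_mul_eq (s := univ.erase i₀) (d := d)
    (r := min ‖d i₀‖ (∑ i ∈ univ.erase i₀, ‖d i‖))
    (le_min (norm_nonneg _) (sum_nonneg fun i _ ↦ hnonneg i))
    (fun i hi ↦ le_min (hd i) (single_le_sum (fun i _ ↦ hnonneg i) hi)) (min_le_right _ _)
  obtain ⟨u, hu⟩ := exists_circle_norm_add_mul_eq (∑ i ∈ univ.erase i₀, d i * z i) (d i₀)
  refine ⟨Function.update z i₀ u, ?_⟩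
  have unchanged : ∑ i ∈ univ.erase i₀, d i * Function.update z i₀ u i
      = ∑ i ∈ univ.erase i₀, d i * z i :=
    sum_congr rfl fun i hi ↦ by rw [Function.update_of_ne (ne_of_mem_erase hi)]
  rw [← sum_erase_add _ _ (mem_univ i₀), Function.update_self, unchanged, hu, hz, abs_sub_comm,
    abs_of_nonneg (sub_nonneg.2 (min_le_left _ _)), ← max_sub_sub_left, sub_self]

lemma exists_unitary_transpose_mul_mul_eq_diagonal_mul_circle [Fintype ι] [DecidableEq ι]
    {A U : Matrix ι ι ℂ} {d : ι → ℂ} (hU : U ∈ unitaryGroup ι ℂ) (hA : A = Uᵀ * diagonal d * U)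
    (z : ι → Circle) :
    ∃ V ∈ unitaryGroup ι ℂ, Vᵀ * A * V = diagonal fun i ↦ d i * z i := by
  choose w hw using fun i ↦ exists_circle_sq_eq (z i)
  have hU' : U * Uᴴ = 1 := mem_unitaryGroup_iff.1 hU
  have hP : diagonal (fun i ↦ (w i : ℂ)) ∈ unitaryGroup ι ℂ := by
    rw [mem_unitaryGroup_iff, star_eq_conjTranspose, diagonal_conjTranspose, diagonal_mul_diagonal,
      ← diagonal_one]
    congr! 2 with i
    rw [Pi.star_apply, Complex.star_def, Complex.mul_conj', Circle.norm_coe,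
      Complex.ofReal_one, one_pow]
  refine ⟨Uᴴ * diagonal (fun i ↦ (w i : ℂ)), mul_mem (Unitary.star_mem hU) hP, ?_⟩
  calc (Uᴴ * diagonal (fun i ↦ (w i : ℂ)))ᵀ * A * (Uᴴ * diagonal (fun i ↦ (w i : ℂ)))
      = diagonal (fun i ↦ (w i : ℂ)) * (U * Uᴴ)ᵀ * diagonal d * (U * Uᴴ)
          * diagonal (fun i ↦ (w i : ℂ)) := by
        simp only [hA, transpose_mul, diagonal_transpose, Matrix.mul_assoc]
    _ = diagonal fun i ↦ d i * z i := by
        rw [hU', transpose_one, Matrix.mul_one, Matrix.mul_one, diagonal_mul_diagonal,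
          diagonal_mul_diagonal]
        congr! 2 with i
        rw [← hw, Circle.coe_pow]
        ring

/-! ### Matrices of signs -/

/-- The matrix whose columns are all vectors of signs, normalised so that its rows are unit vectors.
Its rows are pairwise orthogonal. -/
noncomputable def signMatrix (ι : Type*) [Fintype ι] : Matrix ι (ι → ℤˣ) ℂ :=
  of fun i x ↦ ((√(2 ^ Fintype.card ι))⁻¹ : ℝ) * ((x i : ℤ) : ℂ)

lemma sum_units_mul_units_eq_zero [Fintype ι] [DecidableEq ι] {i j : ι} (hij : i ≠ j) :
    ∑ x : ι → ℤˣ, ((x i : ℤ) : ℂ) * ((x j : ℤ) : ℂ) = 0 := by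
  let χ : (ι → ℤˣ) →* ℂ := ((Int.castRingHom ℂ : ℤ →* ℂ).comp (Units.coeHom ℤ)).comp
    (Pi.evalMonoidHom (fun _ ↦ ℤˣ) i * Pi.evalMonoidHom (fun _ ↦ ℤˣ) j)
  have hχ : χ ≠ 1 := fun h ↦ by
    have := DFunLike.congr_fun h (Pi.mulSingle i (-1))
    norm_num [χ, hij.symm] at this
  simpa [χ] using sum_hom_units_eq_zero χ hχ

lemma signMatrix_apply_sq [Fintype ι] (i : ι) (x : ι → ℤˣ) :
    signMatrix ι i x ^ 2 = (2 ^ Fintype.card ι)⁻¹ := by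
  have sign : ((x i : ℤ) : ℂ) ^ 2 = 1 := by
    rw [← Int.cast_pow, ← Units.val_pow_eq_pow_val, Int.units_sq, Units.val_one, Int.cast_one]
  rw [signMatrix, of_apply, mul_pow, sign, mul_one, ← Complex.ofReal_pow, inv_pow,
    Real.sq_sqrt (by positivity)]
  push_cast
  rfl

lemma signMatrix_mul_conjTranspose [Fintype ι] [DecidableEq ι] :
    signMatrix ι * (signMatrix ι)ᴴ = 1 := by
  have real (j : ι) (x : ι → ℤˣ) : star (signMatrix ι j x) = signMatrix ι j x := by
    simp [signMatrix]
  ext i j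
  simp only [mul_apply, conjTranspose_apply, real]
  rcases eq_or_ne i j with rfl | hij
  · simp [← sq, signMatrix_apply_sq]
  · simp only [signMatrix, of_apply, mul_mul_mul_comm _ (((_ : ℤˣ) : ℤ) : ℂ), ← mul_sum,
      sum_units_mul_units_eq_zero hij, mul_zero, one_apply_ne hij]

lemma preconcurrenceSum_diagonal_signMatrix [Fintype ι] [DecidableEq ι] (d : ι → ℂ) :
    preconcurrenceSum (diagonal d) (signMatrix ι) = ‖∑ i, d i‖ := by
  simp only [preconcurrenceSum, transpose_mul_diagonal_mul_apply_self, signMatrix_apply_sq,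
    ← sum_mul, norm_mul, sum_const, nsmul_eq_mul]
  simp [mul_right_comm _ ‖_‖]

lemma exists_preconcurrenceSum_diagonal_eq_norm_sum [Fintype ι] [DecidableEq ι] (d : ι → ℂ) :
    ∃ T : Matrix ι (Fin (2 ^ Fintype.card ι)) ℂ,
      T * Tᴴ = 1 ∧ preconcurrenceSum (diagonal d) T = ‖∑ i, d i‖ := by
  let e : Fin (2 ^ Fintype.card ι) ≃ (ι → ℤˣ) := (Fintype.equivFinOfCardEq (by simp)).symm
  refine ⟨(signMatrix ι).submatrix id e, ?_, ?_⟩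
  · rw [conjTranspose_submatrix, submatrix_mul_equiv, signMatrix_mul_conjTranspose, submatrix_id_id]
  · rw [← preconcurrenceSum_diagonal_signMatrix]
    simp only [preconcurrenceSum, transpose_mul_diagonal_mul_apply_self, submatrix_apply, id_eq]
    exact e.sum_comp fun x ↦ ‖∑ i, d i * signMatrix ι i x ^ 2‖

/-! ### Equalising the diagonal by an orthogonal congruence -/

/-- The matrix of the reflection in the hyperplane orthogonal to `v`, for a unit vector `v`. -/
def householder [DecidableEq ι] [Ring R] (v : ι → R) : Matrix ι ι R :=
  1 - (2 : R) • vecMulVec v v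

lemma householder_col [DecidableEq ι] [CommRing R] (v : ι → R) (k : ι) :
    (householder v).col k = Pi.single k 1 - (2 * v k) • v := by
  ext r
  simp only [householder, col_apply, Matrix.sub_apply, Matrix.smul_apply, one_apply,
    vecMulVec_apply, Pi.sub_apply, Pi.single_apply, Pi.smul_apply, smul_eq_mul]
  ring

section

variable [Fintype ι] [DecidableEq ι]

lemma householder_mem_orthogonalGroup [CommRing R] {v : ι → R} (hv : v ⬝ᵥ v = 1) :
    householder v ∈ orthogonalGroup ι R := by
  have idem : vecMulVec v v * vecMulVec v v = vecMulVec v v := by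
    rw [vecMulVec_mul_vecMulVec, hv, one_smul]
  rw [mem_orthogonalGroup_iff]
  simp only [householder, transpose_sub, transpose_one, transpose_smul, transpose_vecMulVec,
    sub_mul, mul_sub, Matrix.one_mul, Matrix.mul_one, Matrix.smul_mul, Matrix.mul_smul, idem]
  module

lemma transpose_mul_mul_apply_self_of_col_eq_single [CommSemiring R] (M : Matrix ι ι R)
    {T : Matrix ι κ R} {k : κ} {l : ι} {c : R} (h : T.col k = Pi.single l c) :
    (Tᵀ * M * T) k k = c ^ 2 * M l l := by
  have col (r : ι) : T r k = if r = l then c else 0 := by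
    exact (congrFun h r).trans (Pi.single_apply ..)
  simp only [mul_apply, transpose_apply, col, ite_mul, mul_ite, zero_mul, mul_zero, sum_ite_eq',
    mem_univ, if_true]
  ring

lemma trace_transpose_mul_mul_of_mem_orthogonalGroup [CommRing R] (M : Matrix ι ι R)
    {O : Matrix ι ι R} (hO : O ∈ orthogonalGroup ι R) : (Oᵀ * M * O).trace = M.trace := by
  rw [trace_mul_cycle, (mem_orthogonalGroup_iff ι R).1 hO, Matrix.one_mul]

-- Reflecting in a direction that turns from `eᵢ` to the bisector of `eᵢ` and `eⱼ` moves the `i`-th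
-- diagonal entry continuously from `M i i` to `M j j`.
lemma exists_orthogonal_apply_self_eq_zero (M : Matrix ι ι ℝ) {i j : ι} (hij : i ≠ j)
    (hi : M i i ≤ 0) (hj : 0 ≤ M j j) :
    ∃ O ∈ orthogonalGroup ι ℝ, (Oᵀ * M * O) i i = 0 ∧
      ∀ k, k ≠ i → k ≠ j → (Oᵀ * M * O) k k = M k k := by
  let v (θ : ℝ) : ι → ℝ := Real.cos θ • Pi.single i 1 + Real.sin θ • Pi.single j 1
  let H (θ : ℝ) : Matrix ι ι ℝ := householder (v θ)
  have col_i (θ : ℝ) :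
      (H θ).col i = Pi.single i (-Real.cos (2 * θ)) + Pi.single j (-Real.sin (2 * θ)) := by
    have hvi : v θ i = Real.cos θ := by simp [v, hij]
    rw [householder_col, hvi, Real.cos_two_mul, Real.sin_two_mul]
    ext r
    simp only [v, Pi.add_apply, Pi.sub_apply, Pi.smul_apply, Pi.single_apply, smul_eq_mul]
    split_ifs <;> ring
  have start : ((H 0)ᵀ * M * H 0) i i = M i i := by
    have : (H 0).col i = Pi.single i (-1) := by simp [col_i]
    simp [transpose_mul_mul_apply_self_of_col_eq_single M this]
  have finish : ((H (Real.pi / 4))ᵀ * M * H (Real.pi / 4)) i i = M j j := by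
    have : (H (Real.pi / 4)).col i = Pi.single j (-1) := by
      rw [col_i, show 2 * (Real.pi / 4) = Real.pi / 2 by ring]
      simp
    simp [transpose_mul_mul_apply_self_of_col_eq_single M this]
  have continuous_diag : Continuous fun θ ↦ ((H θ)ᵀ * M * H θ) i i := by
    simp only [H, householder, v]
    fun_prop
  obtain ⟨θ, hθ⟩ := mem_range_of_exists_le_of_exists_ge continuous_diag
    ⟨0, start.trans_le hi⟩ ⟨Real.pi / 4, hj.trans_eq finish.symm⟩
  have unit : v θ ⬝ᵥ v θ = 1 := by simp [v, hij, hij.symm, ← sq]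
  refine ⟨H θ, householder_mem_orthogonalGroup unit, hθ, fun k hki hkj ↦ ?_⟩
  have : (H θ).col k = Pi.single k 1 := by simp [H, householder_col, v, hki, hkj]
  simp [transpose_mul_mul_apply_self_of_col_eq_single M this]

theorem exists_orthogonal_diag_eq_zero (M : Matrix ι ι ℝ) (hM : M.trace = 0) :
    ∃ O ∈ orthogonalGroup ι ℝ, ∀ k, (Oᵀ * M * O) k k = 0 := by
  induction hm : #{k | M k k ≠ 0} using Nat.strong_induction_on generalizing M with
  | h m ih =>
    by_cases hdiag : ∀ k, M k k = 0
    · exact ⟨1, one_mem _, by simpa using hdiag⟩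
    push Not at hdiag
    obtain ⟨j, -, hj⟩ : ∃ j ∈ univ, 0 < M j j :=
      exists_pos_of_sum_zero_of_exists_nonzero _ hM (by simpa using hdiag)
    obtain ⟨i, -, hi⟩ : ∃ i ∈ univ, M i i < 0 := by
      simpa using exists_pos_of_sum_zero_of_exists_nonzero (s := univ) (fun k ↦ -M k k)
        (by simpa [trace] using hM) (by simpa using hdiag)
    have hij : i ≠ j := by
      rintro rfl
      exact hi.not_gt hj
    obtain ⟨H, hH, hHi, hHk⟩ := exists_orthogonal_apply_self_eq_zero M hij hi.le hj.le
    have fewer : #{k | (Hᵀ * M * H) k k ≠ 0} < m := by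
      rw [← hm]
      refine card_lt_card ((ssubset_iff_of_subset fun k hk ↦ ?_).2
        ⟨i, by simpa using hi.ne, by simpa using hHi⟩)
      rw [mem_filter_univ] at hk ⊢
      rcases eq_or_ne k i with rfl | hki
      · exact hi.ne
      rcases eq_or_ne k j with rfl | hkj
      · exact hj.ne'
      rwa [← hHk k hki hkj]
    obtain ⟨O, hO, hdiag⟩ := ih _ fewer (Hᵀ * M * H)
      (by rw [trace_transpose_mul_mul_of_mem_orthogonalGroup M hH, hM]) rfl
    exact ⟨H * O, mul_mem hH hO, by simpa only [transpose_mul, Matrix.mul_assoc] using hdiag⟩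

theorem exists_orthogonal_diag_eq_trace_div_card (M : Matrix ι ι ℝ) :
    ∃ O ∈ orthogonalGroup ι ℝ, ∀ k, (Oᵀ * M * O) k k = M.trace / Fintype.card ι := by
  cases isEmpty_or_nonempty ι
  · exact ⟨1, one_mem _, isEmptyElim⟩
  obtain ⟨O, hO, hdiag⟩ := exists_orthogonal_diag_eq_zero
    (M - (M.trace / Fintype.card ι) • (1 : Matrix ι ι ℝ)) (by simp)
  refine ⟨O, hO, fun k ↦ ?_⟩
  simpa [Matrix.mul_sub, Matrix.sub_mul, (mem_orthogonalGroup_iff' ι ℝ).1 hO, sub_eq_zero]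
    using hdiag k

lemma exists_preconcurrenceSum_diagonal_ofReal_eq_abs_sum (d : ι → ℝ) :
    ∃ T : Matrix ι ι ℂ,
      T * Tᴴ = 1 ∧ preconcurrenceSum (diagonal fun i ↦ (d i : ℂ)) T = |∑ i, d i| := by
  obtain ⟨O, hO, hdiag⟩ := exists_orthogonal_diag_eq_trace_div_card (diagonal d)
  refine ⟨O.map (algebraMap ℝ ℂ), ?_, ?_⟩
  · have real : (O.map (algebraMap ℝ ℂ))ᴴ = Oᵀ.map (algebraMap ℝ ℂ) := by
      ext
      simp
    rw [real, ← Matrix.map_mul, (mem_orthogonalGroup_iff ι ℝ).1 hO]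
    simp
  · have entry (k : ι) : ((O.map (algebraMap ℝ ℂ))ᵀ * diagonal (fun i ↦ (d i : ℂ)) *
        O.map (algebraMap ℝ ℂ)) k k = (((∑ i, d i) / Fintype.card ι : ℝ) : ℂ) := by
      rw [← trace_diagonal, ← hdiag k, transpose_mul_diagonal_mul_apply_self,
        transpose_mul_diagonal_mul_apply_self]
      simp
    simp only [preconcurrenceSum, entry, Complex.norm_real, Real.norm_eq_abs, sum_const, card_univ,
      nsmul_eq_mul, abs_div, Nat.abs_cast]
    rcases isEmpty_or_nonempty ι
    · simp
    · field_simp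

end

/-! ### The concurrence formula -/

section

variable [Fintype ι] [DecidableEq ι] {A U : Matrix ι ι ℂ} {d : ι → ℂ}

lemma max_le_preconcurrenceSum [Fintype κ] {T : Matrix ι κ ℂ} (hU : U ∈ unitaryGroup ι ℂ)
    (hA : A = Uᵀ * diagonal d * U) (i₀ : ι) (hT : T * Tᴴ = 1) :
    max 0 (‖d i₀‖ - ∑ i ∈ univ.erase i₀, ‖d i‖) ≤ preconcurrenceSum A T := by
  refine max_le (preconcurrenceSum_nonneg A T) ?_
  rw [hA, preconcurrenceSum_transpose_mul_mul]
  exact norm_sub_sum_erase_norm_le_preconcurrenceSum_diagonal d i₀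
    (mul_mul_conjTranspose_mul_eq_one (mem_unitaryGroup_iff.1 hU) hT)

lemma exists_preconcurrenceSum_eq_of_phases [Fintype κ] {r : ℝ} (hU : U ∈ unitaryGroup ι ℂ)
    (hA : A = Uᵀ * diagonal d * U) (z : ι → Circle)
    (h : ∃ T : Matrix ι κ ℂ, T * Tᴴ = 1 ∧
      preconcurrenceSum (diagonal fun i ↦ d i * z i) T = r) :
    ∃ T : Matrix ι κ ℂ, T * Tᴴ = 1 ∧ preconcurrenceSum A T = r := by
  obtain ⟨T, hT, hr⟩ := h
  obtain ⟨V, hV, hVA⟩ := exists_unitary_transpose_mul_mul_eq_diagonal_mul_circle hU hA z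
  exact ⟨V * T, mul_mul_conjTranspose_mul_eq_one (mem_unitaryGroup_iff.1 hV) hT, by
    rw [← preconcurrenceSum_transpose_mul_mul, hVA, hr]⟩

lemma exists_preconcurrenceSum_eq_max {i₀ : ι} (hU : U ∈ unitaryGroup ι ℂ)
    (hA : A = Uᵀ * diagonal d * U) (hd : ∀ i, ‖d i‖ ≤ ‖d i₀‖) :
    ∃ T : Matrix ι (Fin (2 ^ Fintype.card ι)) ℂ, T * Tᴴ = 1 ∧
      preconcurrenceSum A T = max 0 (‖d i₀‖ - ∑ i ∈ univ.erase i₀, ‖d i‖) := by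
  obtain ⟨z, hz⟩ := exists_circle_norm_sum_mul_eq_max hd
  rw [← hz]
  exact exists_preconcurrenceSum_eq_of_phases hU hA z
    (exists_preconcurrenceSum_diagonal_eq_norm_sum _)

lemma exists_square_preconcurrenceSum_eq_sub {i₀ : ι} (hU : U ∈ unitaryGroup ι ℂ)
    (hA : A = Uᵀ * diagonal d * U) (hle : ∑ i ∈ univ.erase i₀, ‖d i‖ ≤ ‖d i₀‖) :
    ∃ T : Matrix ι ι ℂ, T * Tᴴ = 1 ∧
      preconcurrenceSum A T = ‖d i₀‖ - ∑ i ∈ univ.erase i₀, ‖d i‖ := by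
  choose p hp using fun i ↦ exists_circle_mul_eq_norm (d i)
  let s (i : ι) : ℝ := if i = i₀ then ‖d i‖ else -‖d i‖
  have sum_s : ∑ i, s i = ‖d i₀‖ - ∑ i ∈ univ.erase i₀, ‖d i‖ := by
    rw [← add_sum_erase _ _ (mem_univ i₀), sub_eq_add_neg, ← sum_neg_distrib]
    exact congr_arg₂ _ (if_pos rfl) (sum_congr rfl fun i hi ↦ if_neg (ne_of_mem_erase hi))
  have nonneg : 0 ≤ ∑ i, s i := by rw [sum_s, sub_nonneg]; exact hle
  have phases : (fun i ↦ d i * ↑(if i = i₀ then p i else -p i)) = fun i ↦ (s i : ℂ) := by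
    ext i
    by_cases hi : i = i₀ <;> simp [s, hi, hp]
  apply exists_preconcurrenceSum_eq_of_phases hU hA fun i ↦ if i = i₀ then p i else -p i
  rw [phases, ← sum_s, ← abs_of_nonneg nonneg]
  exact exists_preconcurrenceSum_diagonal_ofReal_eq_abs_sum s

theorem concurrence_formula_general {i₀ : ι} (hU : U ∈ unitaryGroup ι ℂ)
    (hA : A = Uᵀ * diagonal d * U) (hd : ∀ i, ‖d i‖ ≤ ‖d i₀‖) :
    IsLeast {c : ℝ | ∃ K : ℕ, Fintype.card ι ≤ K ∧ ∃ T : Matrix ι (Fin K) ℂ,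
        T * Tᴴ = 1 ∧ c = preconcurrenceSum A T}
      (max 0 (‖d i₀‖ - ∑ i ∈ univ.erase i₀, ‖d i‖)) ∧
    (∑ i ∈ univ.erase i₀, ‖d i‖ ≤ ‖d i₀‖ →
      ∃ T : Matrix ι ι ℂ, T * Tᴴ = 1 ∧
        preconcurrenceSum A T = max 0 (‖d i₀‖ - ∑ i ∈ univ.erase i₀, ‖d i‖)) := by
  refine ⟨⟨?_, ?_⟩, fun hle ↦ ?_⟩
  · obtain ⟨T, hT, hmax⟩ := exists_preconcurrenceSum_eq_max hU hA hd
    exact ⟨2 ^ Fintype.card ι, Nat.lt_two_pow_self.le, T, hT, hmax.symm⟩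
  · rintro _ ⟨K, -, T, hT, rfl⟩
    exact max_le_preconcurrenceSum hU hA i₀ hT
  · rw [max_eq_right (sub_nonneg.2 hle)]
    exact exists_square_preconcurrenceSum_eq_sub hU hA hle

end

/-- Wootters' concurrence formula: for a complex symmetric matrix `A` with Takagi
decomposition `A = Uᵀ Σ U` and singular values `σ₁ ≥ ⋯ ≥ σ_n`, the infimum over all
`K ≥ n` and right-unitary `n × K` matrices `T` of `∑_k |(Tᵀ A T)_{kk}|` equals
`max(0, σ₁ − ∑_{i≥2} σ_i)`, and it is attained with `K = n` when `σ₁ ≥ ∑_{i≥2} σ_i`. -/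
theorem concurrence_formula {n : ℕ} [NeZero n]
    (A : Matrix (Fin n) (Fin n) ℂ) (hsymm : Aᵀ = A)
    (σ : Fin n → ℝ) (hσ0 : ∀ i, 0 ≤ σ i) (hσmono : Antitone σ)
    (U : Matrix (Fin n) (Fin n) ℂ) (hU : U ∈ Matrix.unitaryGroup (Fin n) ℂ)
    (hTakagi : A = Uᵀ * Matrix.diagonal (fun i => (σ i : ℂ)) * U) :
    IsGLB {c : ℝ | ∃ (K : ℕ), n ≤ K ∧ ∃ T : Matrix (Fin n) (Fin K) ℂ,
        T * Tᴴ = 1 ∧ c = ∑ k, ‖(Tᵀ * A * T) k k‖}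
      (max 0 (σ 0 - ∑ i ∈ Finset.univ.erase 0, σ i)) ∧
    ((∑ i ∈ Finset.univ.erase 0, σ i) ≤ σ 0 →
      ∃ T : Matrix (Fin n) (Fin n) ℂ, T * Tᴴ = 1 ∧
        ∑ k, ‖(Tᵀ * A * T) k k‖ =
          max 0 (σ 0 - ∑ i ∈ Finset.univ.erase 0, σ i)) := by
  have hmax (i : Fin n) : ‖(σ i : ℂ)‖ ≤ ‖(σ 0 : ℂ)‖ := by
    simpa only [Complex.norm_real, Real.norm_of_nonneg (hσ0 _)] using hσmono (Fin.zero_le i)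
  have h := concurrence_formula_general hU hTakagi hmax
  simp only [Complex.norm_real, Real.norm_of_nonneg (hσ0 _), Fintype.card_fin] at h
  exact ⟨h.1.isGLB, h.2⟩
end

section
/- Every complex symmetric matrix A admits a Takagi decomposition: there exists a unitary matrix U and a nonnegative diagonal matrix Σ such that A = Uᵀ Σ U, where the diagonal entries of Σ are the singular values of A. -/
open Matrix

/-!
A complex symmetric matrix `A` defines the conjugate-linear map `T x = conj (A x)`, which satisfies
`⟪T x, y⟫ = ⟪T y, x⟫`. Over the reals, `T` is therefore a symmetric operator and has a real
eigenvalue `σ`; since `T (i x) = -i T x`, multiplying an eigenvector by `i` flips the sign of `σ`,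
so that `σ ≥ 0` may be assumed. The orthogonal complement of an eigenvector is invariant under `T`,
and induction on the dimension gives an orthonormal basis of vectors `vᵢ` with
`A vᵢ = σᵢ conj vᵢ`. If `P` is the unitary matrix with columns `vᵢ`, this says
`A P = conj P Σ`, that is, `A = Uᵀ Σ U` with `U = Pᴴ`.
-/

open Module
open scoped InnerProductSpace

section ConjSymmetric

variable {V : Type*} [NormedAddCommGroup V] [InnerProductSpace ℂ V]

/-- Symmetry of a conjugate-linear map: the complex bilinear form `(x, y) ↦ ⟪T x, y⟫` is symmetric.
This is the conjugate-linear counterpart of `LinearMap.IsSymmetric`. -/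
def IsConjSymmetric (T : V →ₗ⋆[ℂ] V) : Prop :=
  ∀ x y, ⟪T x, y⟫_ℂ = ⟪T y, x⟫_ℂ

/-- A conjugate-linear map regarded as a real-linear one, so that the real spectral theorem applies
to it. -/
def conjLinearRestrictReal (T : V →ₗ⋆[ℂ] V) : V →ₗ[ℝ] V where
  toFun := T
  map_add' := T.map_add
  map_smul' r x := by simp [← Complex.coe_smul]

namespace IsConjSymmetric

variable {T : V →ₗ⋆[ℂ] V}

lemma isSymmetric_conjLinearRestrictReal (hT : IsConjSymmetric T) :
    letI : InnerProductSpace ℝ V := InnerProductSpace.complexToReal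
    (conjLinearRestrictReal T).IsSymmetric := fun x y => by
  change (⟪T x, y⟫_ℂ).re = (⟪x, T y⟫_ℂ).re
  rw [hT, ← inner_conj_symm, Complex.conj_re]

lemma exists_ne_zero_apply_eq_smul [FiniteDimensional ℂ V] [Nontrivial V]
    (hT : IsConjSymmetric T) : ∃ x ≠ 0, ∃ μ : ℝ, T x = (μ : ℂ) • x := by
  let : InnerProductSpace ℝ V := InnerProductSpace.complexToReal
  have hμ := hT.isSymmetric_conjLinearRestrictReal.hasEigenvalue_iSup_of_finiteDimensional
  obtain ⟨x, hx⟩ := hμ.exists_hasEigenvector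
  exact ⟨x, hx.2, _, hx.apply_eq_smul⟩

lemma exists_norm_eq_one_apply_eq_smul [FiniteDimensional ℂ V] [Nontrivial V]
    (hT : IsConjSymmetric T) :
    ∃ (x : V) (σ : ℝ), ‖x‖ = 1 ∧ 0 ≤ σ ∧ T x = (σ : ℂ) • x := by
  obtain ⟨x, hx, μ, hTx⟩ := hT.exists_ne_zero_apply_eq_smul
  obtain ⟨y, hy, hTy⟩ : ∃ y ≠ 0, T y = ((|μ| : ℝ) : ℂ) • y := by
    rcases le_total 0 μ with hμ | hμ
    · exact ⟨x, hx, by rw [abs_of_nonneg hμ, hTx]⟩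
    · refine ⟨Complex.I • x, smul_ne_zero Complex.I_ne_zero hx, ?_⟩
      rw [map_smulₛₗ, hTx, abs_of_nonpos hμ, Complex.conj_I, Complex.ofReal_neg, neg_smul, neg_smul,
        smul_comm]
  refine ⟨(‖y‖⁻¹ : ℂ) • y, |μ|, norm_smul_inv_norm hy, abs_nonneg μ, ?_⟩
  rw [map_smulₛₗ, hTy, map_inv₀, Complex.conj_ofReal, smul_comm]

lemma apply_mem_orthogonal (hT : IsConjSymmetric T) {K : Submodule ℂ V}
    (hK : ∀ x ∈ K, T x ∈ K) : ∀ y ∈ Kᗮ, T y ∈ Kᗮ := fun y hy x hx => by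
  rw [← inner_conj_symm, hT, Submodule.inner_right_of_mem_orthogonal (hK x hx) hy, map_zero]

lemma restrict (hT : IsConjSymmetric T) {K : Submodule ℂ V} (hK : ∀ x ∈ K, T x ∈ K) :
    IsConjSymmetric (T.restrict hK) := fun x y => hT x y

lemma exists_orthonormal_apply_eq_smul [FiniteDimensional ℂ V] (hT : IsConjSymmetric T) {n : ℕ}
    (hn : finrank ℂ V = n) :
    ∃ (v : Fin n → V) (σ : Fin n → ℝ),
      Orthonormal ℂ v ∧ (∀ i, 0 ≤ σ i) ∧ ∀ i, T (v i) = (σ i : ℂ) • v i := by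
  induction n generalizing V with
  | zero => exact ⟨Fin.elim0, Fin.elim0, by simp [Orthonormal], by simp, by simp⟩
  | succ n ih =>
    have : Nontrivial V := nontrivial_of_finrank_pos (R := ℂ) (by lia)
    have : Fact (finrank ℂ V = n + 1) := ⟨hn⟩
    obtain ⟨x, s, hx, hs, hTx⟩ := hT.exists_norm_eq_one_apply_eq_smul
    have hspan : ∀ y ∈ ℂ ∙ x, T y ∈ ℂ ∙ x := fun y hy => by
      obtain ⟨c, rfl⟩ := Submodule.mem_span_singleton.mp hy
      rw [map_smulₛₗ, hTx, smul_smul]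
      exact Submodule.mem_span_singleton.mpr ⟨_, rfl⟩
    have hperp := hT.apply_mem_orthogonal hspan
    obtain ⟨v, σ, hv, hσ, hTv⟩ := ih (hT.restrict hperp)
      (Submodule.finrank_orthogonal_span_singleton (norm_ne_zero_iff.mp (by simp [hx])))
    have hxv (i) : ⟪x, (v i : V)⟫_ℂ = 0 :=
      Submodule.mem_orthogonal_singleton_iff_inner_right.mp (v i).2
    exact ⟨vecCons x fun i => v i, vecCons s σ,
      orthonormal_vecCons_iff.mpr ⟨hx, hxv, hv.comp_linearIsometry (ℂ ∙ x)ᗮ.subtypeₗᵢ⟩,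
      Fin.cases hs hσ, Fin.cases hTx fun i => congrArg Subtype.val (hTv i)⟩

theorem exists_orthonormalBasis_apply_eq_smul [FiniteDimensional ℂ V] (hT : IsConjSymmetric T)
    {ι : Type*} [Fintype ι] (hι : finrank ℂ V = Fintype.card ι) :
    ∃ (b : OrthonormalBasis ι ℂ V) (σ : ι → ℝ),
      (∀ i, 0 ≤ σ i) ∧ ∀ i, T (b i) = (σ i : ℂ) • b i := by
  obtain ⟨v, σ, hv, hσ, hTv⟩ := hT.exists_orthonormal_apply_eq_smul hι
  have hspan : ⊤ ≤ Submodule.span ℂ (Set.range v) :=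
    (hv.linearIndependent.span_eq_top_of_card_eq_finrank' (by simp [hι])).ge
  let e := Fintype.equivFin ι
  exact ⟨(OrthonormalBasis.mk hv hspan).reindex e.symm, σ ∘ e, fun i => hσ (e i),
    fun i => by simp [hTv, e]⟩

end IsConjSymmetric

end ConjSymmetric

section Matrix

variable {ι : Type*} [Fintype ι]

/-- The conjugate-linear map `x ↦ conj (A x)`; its eigenvectors with real eigenvalue `σ` are the
solutions of `A x = σ conj x`. -/
def conjMulVec (A : Matrix ι ι ℂ) : EuclideanSpace ℂ ι →ₗ⋆[ℂ] EuclideanSpace ℂ ι where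
  toFun x := WithLp.toLp 2 (star (A *ᵥ x))
  map_add' x y := by simp [mulVec_add]
  map_smul' c x := by simp [mulVec_smul]

lemma inner_conjMulVec (A : Matrix ι ι ℂ) (x y : EuclideanSpace ℂ ι) :
    ⟪conjMulVec A x, y⟫_ℂ = (A *ᵥ x) ⬝ᵥ y := by
  simp [conjMulVec, EuclideanSpace.inner_eq_star_dotProduct, dotProduct_comm]

lemma isConjSymmetric_conjMulVec {A : Matrix ι ι ℂ} (hA : A.IsSymm) :
    IsConjSymmetric (conjMulVec A) := fun x y => by
  rw [inner_conjMulVec, inner_conjMulVec, dotProduct_comm, dotProduct_mulVec, ← mulVec_transpose,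
    hA]

lemma conjTranspose_mul_self_transpose_mul_mul {α : Type*} [CommRing α] [StarRing α] [DecidableEq ι]
    {U : Matrix ι ι α} (hU : U ∈ unitaryGroup ι α) (D : Matrix ι ι α) :
    (Uᵀ * D * U)ᴴ * (Uᵀ * D * U) = Uᴴ * (Dᴴ * D) * U := by
  have hUT : Uᵀᴴ * Uᵀ = 1 := mem_unitaryGroup_iff'.mp (transpose_mem_unitaryGroup_iff.mpr hU)
  calc (Uᵀ * D * U)ᴴ * (Uᵀ * D * U) = Uᴴ * Dᴴ * (Uᵀᴴ * Uᵀ) * D * U := by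
        simp only [conjTranspose_mul, Matrix.mul_assoc]
    _ = Uᴴ * (Dᴴ * D) * U := by rw [hUT, Matrix.mul_one, Matrix.mul_assoc Uᴴ]

theorem exists_unitary_eq_transpose_mul_diagonal_mul [DecidableEq ι] {A : Matrix ι ι ℂ}
    (hA : A.IsSymm) :
    ∃ U ∈ unitaryGroup ι ℂ, ∃ σ : ι → ℝ,
      (∀ i, 0 ≤ σ i) ∧ A = Uᵀ * diagonal (fun i => (σ i : ℂ)) * U := by
  obtain ⟨b, σ, hσ, hb⟩ :=
    (isConjSymmetric_conjMulVec hA).exists_orthonormalBasis_apply_eq_smul finrank_euclideanSpace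
  let P : Matrix ι ι ℂ := (EuclideanSpace.basisFun ι ℂ).toBasis.toMatrix b
  have hP : P ∈ unitaryGroup ι ℂ :=
    (EuclideanSpace.basisFun ι ℂ).toMatrix_orthonormalBasis_mem_unitary b
  have hAP : A * P = Pᴴᵀ * diagonal (fun i => (σ i : ℂ)) := by
    ext i j
    have hij := congrArg star (congrArg (fun x : EuclideanSpace ℂ ι => x i) (hb j))
    rw [mul_diagonal]
    simpa [conjMulVec, P, Basis.toMatrix_apply, mul_apply, mulVec, dotProduct, mul_comm] using hij
  refine ⟨Pᴴ, Unitary.star_mem hP, σ, hσ, ?_⟩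
  rw [← hAP, Matrix.mul_assoc, ← star_eq_conjTranspose, mem_unitaryGroup_iff.mp hP, Matrix.mul_one]

theorem takagi_decomposition_general [DecidableEq ι] (A : Matrix ι ι ℂ) (hsymm : Aᵀ = A) :
    ∃ (U : Matrix ι ι ℂ) (σ : ι → ℝ),
      U ∈ unitaryGroup ι ℂ ∧ (∀ i, 0 ≤ σ i) ∧
      A = Uᵀ * diagonal (fun i => (σ i : ℂ)) * U ∧
      Aᴴ * A = Uᴴ * diagonal (fun i => (σ i : ℂ) ^ 2) * U := by
  obtain ⟨U, hU, σ, hσ, hA⟩ := exists_unitary_eq_transpose_mul_diagonal_mul hsymm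
  refine ⟨U, σ, hU, hσ, hA, ?_⟩
  have hsq : (diagonal fun i => (σ i : ℂ))ᴴ * diagonal (fun i => (σ i : ℂ)) =
      diagonal fun i => (σ i : ℂ) ^ 2 := by
    simp [diagonal_conjTranspose, Pi.star_def, sq]
  conv_lhs => rw [hA]
  rw [conjTranspose_mul_self_transpose_mul_mul hU, hsq]

end Matrix

/-- Takagi (Autonne–Takagi) factorization: every complex symmetric matrix `A` can be
written as `A = Uᵀ Σ U` with `U` unitary and `Σ` a nonnegative diagonal matrix whose
diagonal entries are the singular values of `A` (i.e. `A†A = U† Σ² U`). -/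
theorem takagi_decomposition {n : ℕ} (A : Matrix (Fin n) (Fin n) ℂ) (hsymm : Aᵀ = A) :
    ∃ (U : Matrix (Fin n) (Fin n) ℂ) (σ : Fin n → ℝ),
      U ∈ Matrix.unitaryGroup (Fin n) ℂ ∧ (∀ i, 0 ≤ σ i) ∧
      A = Uᵀ * Matrix.diagonal (fun i => (σ i : ℂ)) * U ∧
      Aᴴ * A = Uᴴ * Matrix.diagonal (fun i => ((σ i : ℂ)) ^ 2) * U :=
  takagi_decomposition_general A hsymm
end

section
/- Let A be a complex symmetric 3×3 matrix with singular values σ₁ ≥ σ₂ ≥ σ₃ and let σ₁ < σ₂ + σ₃. Then the minimum of ∑_{k=1}^3 |(Tᵀ A T)_{kk}| over unitary 3×3 matrices T equals |σ₁ − σ₂ − σ₃| > 0, whereas the minimum over 3×4 right-unitary T (T T† = I₃) equals 0. -/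
open Matrix

/-!
Write `M = Vᵀ D V` with `V` unitary and `D` the diagonal matrix of singular values. The matrix
`W = V⁻¹ (V⁻¹)ᵀ` is symmetric and unitary, and `tr (W M) = tr D`. In dimension three every symmetric
unitary `W` is `2 z zᵀ` plus a diagonal contraction, and then automatically `‖z‖ ≤ 1`. Hence
`σ₁ + σ₂ + σ₃ = |tr (W M)| ≤ 2 |zᵀ M z| + ∑ |M k k| ≤ 2 σ₁ + ∑ |M k k|`, which is the lower bound.

For the upper bounds, `V` is a real matrix with orthonormal rows multiplied by a phase in each row.
Three columns: the phases turn `D` into `diag (-σ₁, σ₂, σ₃)`, and a suitable rotation makes all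
diagonal entries nonnegative, so that their absolute values add up to the trace. Four columns: the
phases close the triangle with sides `σ₁, σ₂, σ₃`, and three rows of a 4×4 Hadamard matrix
spread this zero sum over all diagonal entries.
-/

section Unitary

variable {n : Type*} [Fintype n] [DecidableEq n]

theorem sum_norm_sq_mulVec_of_mem_unitaryGroup {V : Matrix n n ℂ} (hV : V ∈ unitaryGroup n ℂ)
    (z : n → ℂ) : ∑ i, ‖(V *ᵥ z) i‖ ^ 2 = ∑ i, ‖z i‖ ^ 2 := by
  have ofReal_sum_norm_sq (w : n → ℂ) : ((∑ i, ‖w i‖ ^ 2 : ℝ) : ℂ) = star w ⬝ᵥ w := by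
    simp [dotProduct, Complex.conj_mul']
  rw [← Complex.ofReal_inj, ofReal_sum_norm_sq, ofReal_sum_norm_sq, star_mulVec, dotProduct_mulVec,
    vecMul_vecMul, ← star_eq_conjTranspose, mem_unitaryGroup_iff'.mp hV, vecMul_one]

theorem adjugate_eq_det_smul_star_of_mem_unitaryGroup {W : Matrix n n ℂ}
    (hW : W ∈ unitaryGroup n ℂ) : W.adjugate = W.det • star W := by
  calc W.adjugate = W.adjugate * W * star W := by
        rw [Matrix.mul_assoc, mem_unitaryGroup_iff.mp hW, Matrix.mul_one]
    _ = W.det • star W := by rw [adjugate_mul, smul_mul, Matrix.one_mul]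

theorem norm_det_of_mem_unitaryGroup {W : Matrix n n ℂ} (hW : W ∈ unitaryGroup n ℂ) :
    ‖W.det‖ = 1 :=
  CStarRing.norm_of_mem_unitary (det_of_mem_unitary hW)

theorem norm_adjugate_apply_of_mem_unitaryGroup {W : Matrix n n ℂ} (hW : W ∈ unitaryGroup n ℂ)
    (i j : n) : ‖W.adjugate i j‖ = ‖W j i‖ := by
  simp [adjugate_eq_det_smul_star_of_mem_unitaryGroup hW, norm_det_of_mem_unitaryGroup hW]

end Unitary

/-- `W` is the sum of `2 z zᵀ` and a diagonal matrix with entries in the closed unit disc. The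
condition is stated entrywise. It bounds `tr (W M)` in terms of `zᵀ M z` and the diagonal of `M`. -/
structure IsRankOneSplitting {n : Type*} (W : Matrix n n ℂ) (z : n → ℂ) : Prop where
  apply_of_ne : ∀ i j, i ≠ j → W i j = 2 * z i * z j
  norm_diag_sub_le : ∀ i, ‖W i i - 2 * z i ^ 2‖ ≤ 1

namespace IsRankOneSplitting

variable {n : Type*} {W : Matrix n n ℂ} {z : n → ℂ}

theorem of_isSymm [LinearOrder n] (hs : W.IsSymm)
    (apply_of_lt : ∀ i j, i < j → W i j = 2 * z i * z j)
    (norm_diag_sub_le : ∀ i, ‖W i i - 2 * z i ^ 2‖ ≤ 1) : IsRankOneSplitting W z where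
  apply_of_ne i j hij := by
    obtain hij | hji := hij.lt_or_gt
    · exact apply_of_lt i j hij
    · rw [← hs.apply, apply_of_lt j i hji, mul_right_comm]
  norm_diag_sub_le := norm_diag_sub_le

theorem eq_smul_vecMulVec_add_diagonal [DecidableEq n] (h : IsRankOneSplitting W z) :
    W = (2 : ℂ) • vecMulVec z z + diagonal fun i => W i i - 2 * z i ^ 2 := by
  ext i j
  obtain rfl | hij := eq_or_ne i j
  · rw [Matrix.add_apply, Matrix.smul_apply, vecMulVec_apply, diagonal_apply_eq, smul_eq_mul]
    ring
  · simp [vecMulVec_apply, hij, h.apply_of_ne i j hij, mul_assoc]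

theorem norm_trace_mul_le [Fintype n] (h : IsRankOneSplitting W z) (M : Matrix n n ℂ) :
    ‖(W * M).trace‖ ≤ 2 * ‖z ⬝ᵥ M *ᵥ z‖ + ∑ k, ‖M k k‖ := by
  classical
  set e : n → ℂ := fun i => W i i - 2 * z i ^ 2
  have trace_eq : (W * M).trace = 2 * (z ⬝ᵥ M *ᵥ z) + ∑ k, e k * M k k := by
    rw [h.eq_smul_vecMulVec_add_diagonal, add_mul, trace_add, smul_mul, trace_smul, vecMulVec_mul,
      trace_vecMulVec, dotProduct_comm z, ← dotProduct_mulVec, smul_eq_mul]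
    simp only [trace, diag_apply, diagonal_mul, e]
  rw [trace_eq]
  refine (norm_add_le _ _).trans (add_le_add (by simp) (norm_sum_le_of_le _ fun k _ => ?_))
  rw [norm_mul]
  exact mul_le_of_le_one_left (norm_nonneg _) (h.norm_diag_sub_le k)

theorem sum_norm_sq_le_one [Fintype n] [DecidableEq n] (h : IsRankOneSplitting W z)
    (hW : W ∈ unitaryGroup n ℂ) : ∑ i, ‖z i‖ ^ 2 ≤ 1 := by
  set N : ℝ := ∑ i, ‖z i‖ ^ 2 with hN
  set e : n → ℂ := fun i => W i i - 2 * z i ^ 2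
  have mulVec_star (i : n) : (W *ᵥ star z) i = 2 * N * z i + e i * star (z i) := by
    have dotProduct_star : z ⬝ᵥ star z = N := by simp [dotProduct, hN, Complex.mul_conj']
    rw [h.eq_smul_vecMulVec_add_diagonal, add_mulVec, smul_mulVec, vecMulVec_mulVec,
      dotProduct_star]
    simp only [Pi.add_apply, Pi.smul_apply, smul_eq_mul, mulVec_diagonal, Pi.star_apply,
      op_smul_eq_mul, e]
    ring
  -- `W` preserves `‖star z‖`, while it would expand `star z` if `1 < N`.
  have entry_le (i : n) : 2 * N * ‖z i‖ ≤ ‖(W *ᵥ star z) i‖ + ‖z i‖ := by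
    calc 2 * N * ‖z i‖ = ‖(W *ᵥ star z) i - e i * star (z i)‖ := by
          rw [mulVec_star, add_sub_cancel_right]
          simp [abs_of_nonneg (show 0 ≤ N by positivity)]
      _ ≤ ‖(W *ᵥ star z) i‖ + ‖e i * star (z i)‖ := norm_sub_le _ _
      _ ≤ ‖(W *ᵥ star z) i‖ + ‖z i‖ := by
          rw [norm_mul, norm_star]
          gcongr
          exact mul_le_of_le_one_left (norm_nonneg _) (h.norm_diag_sub_le i)
  have sum_le : 4 * N * N ≤ N + 3 * N := by
    calc 4 * N * N = ∑ i, 4 * N * ‖z i‖ ^ 2 := by rw [← Finset.mul_sum]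
      _ ≤ ∑ i, (‖(W *ᵥ star z) i‖ ^ 2 + 3 * ‖z i‖ ^ 2) := by
          refine Finset.sum_le_sum fun i _ => ?_
          nlinarith [entry_le i, norm_nonneg (z i), sq_nonneg (‖(W *ᵥ star z) i‖ - ‖z i‖)]
      _ = N + 3 * N := by
          rw [Finset.sum_add_distrib, ← Finset.mul_sum, sum_norm_sq_mulVec_of_mem_unitaryGroup hW]
          simp [hN]
  nlinarith

theorem insertNth {m : ℕ} {W : Matrix (Fin (m + 1)) (Fin (m + 1)) ℂ} (hs : W.IsSymm)
    {i : Fin (m + 1)} (hi : ∀ j, W i (i.succAbove j) = 0) (hii : ‖W i i‖ ≤ 1) {z : Fin m → ℂ}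
    (h : IsRankOneSplitting (W.submatrix i.succAbove i.succAbove) z) :
    IsRankOneSplitting W (i.insertNth 0 z) where
  apply_of_ne := by
    simp only [Fin.forall_iff_succAbove i]
    refine ⟨by simp [hi], fun j => ⟨?_, fun k hjk => ?_⟩⟩
    · simp [hs.apply i, hi]
    · simpa using h.apply_of_ne j k (fun e => hjk (by rw [e]))
  norm_diag_sub_le := by
    rw [Fin.forall_iff_succAbove i]
    exact ⟨by simpa using hii, fun j => by simpa using h.norm_diag_sub_le j⟩

end IsRankOneSplitting

theorem submatrix_succAbove_mem_unitaryGroup {n : ℕ}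
    {W : Matrix (Fin (n + 1)) (Fin (n + 1)) ℂ} (hW : W ∈ unitaryGroup (Fin (n + 1)) ℂ)
    {i : Fin (n + 1)} (hi : ∀ j, W (i.succAbove j) i = 0) :
    W.submatrix i.succAbove i.succAbove ∈ unitaryGroup (Fin n) ℂ := by
  rw [mem_unitaryGroup_iff] at hW ⊢
  ext j k
  have h := congr_fun₂ hW (i.succAbove j) (i.succAbove k)
  rw [mul_apply, Fin.sum_univ_succAbove _ i] at h
  simpa [mul_apply, hi, one_apply] using h

theorem exists_isRankOneSplitting_fin_two {W : Matrix (Fin 2) (Fin 2) ℂ}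
    (hW : W ∈ unitaryGroup (Fin 2) ℂ) (hs : W.IsSymm) : ∃ z, IsRankOneSplitting W z := by
  have h10 : W 1 0 = W 0 1 := hs.apply 0 1
  by_cases hr : W 0 1 = 0
  · exact ⟨0, by simp [Fin.forall_fin_two, h10, hr],
      fun i => by simpa using entry_norm_bound_of_unitary hW i i⟩
  have cofactor : W 1 1 = W.det * star (W 0 0) := by
    simpa [adjugate_fin_two] using
      congr_fun₂ (adjugate_eq_det_smul_star_of_mem_unitaryGroup hW) 0 0
  have det_eq : W.det = W 0 0 * W 1 1 - W 0 1 ^ 2 := by rw [det_fin_two, h10, sq]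
  have h00 : W 0 0 - 1 ≠ 0 := by
    intro h
    rw [sub_eq_zero] at h
    rw [h, star_one, mul_one] at cofactor
    rw [h, one_mul, ← cofactor] at det_eq
    exact hr (pow_eq_zero_iff two_ne_zero |>.mp (by linear_combination det_eq))
  obtain ⟨y, hy⟩ := IsAlgClosed.exists_pow_nat_eq ((W 0 0 - 1) / 2) (n := 2) two_pos
  have hy0 : y ≠ 0 := by
    rintro rfl
    exact h00 (by linear_combination -2 * hy)
  have corner : W 1 1 - 2 * (W 0 1 / (2 * y)) ^ 2 = W.det * star (1 - W 0 0) / (W 0 0 - 1) := by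
    have : 2 * (W 0 1 / (2 * y)) ^ 2 = W 0 1 ^ 2 / (W 0 0 - 1) := by
      rw [show W 0 0 - 1 = 2 * y ^ 2 by rw [hy]; ring]
      field_simp
    rw [this, eq_div_iff h00, sub_mul, div_mul_cancel₀ _ h00, star_sub, star_one]
    linear_combination -cofactor - det_eq
  have off_diag : W 0 1 = 2 * y * (W 0 1 / (2 * y)) := by field_simp
  refine ⟨![y, W 0 1 / (2 * y)], .of_isSymm hs ?_ ?_⟩
  · simpa [Fin.forall_fin_two] using off_diag
  · simp only [Fin.forall_fin_two, cons_val_zero, cons_val_one, corner]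
    constructor
    · rw [hy, mul_div_cancel₀ _ two_ne_zero, sub_sub_cancel, norm_one]
    · rw [norm_div, norm_mul, norm_star, norm_det_of_mem_unitaryGroup hW, one_mul, norm_sub_rev]
      exact div_self_le_one _

theorem exists_isRankOneSplitting_of_row_eq_zero {W : Matrix (Fin 3) (Fin 3) ℂ}
    (hW : W ∈ unitaryGroup (Fin 3) ℂ) (hs : W.IsSymm) {i : Fin 3}
    (hi : ∀ j, W i (i.succAbove j) = 0) : ∃ z, IsRankOneSplitting W z := by
  have hcol (j : Fin 2) : W (i.succAbove j) i = 0 := by rw [hs.apply, hi]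
  obtain ⟨z, hz⟩ := exists_isRankOneSplitting_fin_two
    (submatrix_succAbove_mem_unitaryGroup hW hcol) (hs.submatrix _)
  exact ⟨_, hz.insertNth hs hi (entry_norm_bound_of_unitary hW i i)⟩

theorem exists_isRankOneSplitting_of_ne_zero {W : Matrix (Fin 3) (Fin 3) ℂ}
    (hW : W ∈ unitaryGroup (Fin 3) ℂ) (hs : W.IsSymm)
    (h01 : W 0 1 ≠ 0) (h02 : W 0 2 ≠ 0) (h12 : W 1 2 ≠ 0) : ∃ z, IsRankOneSplitting W z := by
  have h10 : W 1 0 = W 0 1 := hs.apply 0 1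
  have h20 : W 2 0 = W 0 2 := hs.apply 0 2
  have h21 : W 2 1 = W 1 2 := hs.apply 1 2
  -- The off-diagonal entries determine `z`; for the diagonal, use that each minor of a unitary
  -- matrix has the modulus of the complementary entry.
  have minor12 : ‖W 0 1 * W 0 2 - W 0 0 * W 1 2‖ = ‖W 1 2‖ := by
    simpa [adjugate_fin_three, h10, h20, h21, add_comm, sub_eq_add_neg, mul_comm] using
      norm_adjugate_apply_of_mem_unitaryGroup hW 2 1
  have minor02 : ‖W 0 1 * W 1 2 - W 1 1 * W 0 2‖ = ‖W 0 2‖ := by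
    simpa [adjugate_fin_three, h10, h20, h21, add_comm, sub_eq_add_neg, mul_comm] using
      norm_adjugate_apply_of_mem_unitaryGroup hW 2 0
  have minor01 : ‖W 0 2 * W 1 2 - W 2 2 * W 0 1‖ = ‖W 0 1‖ := by
    simpa [adjugate_fin_three, h10, h20, h21, add_comm, sub_eq_add_neg, mul_comm] using
      norm_adjugate_apply_of_mem_unitaryGroup hW 1 0
  obtain ⟨t, ht⟩ :=
    IsAlgClosed.exists_pow_nat_eq (2 * W 0 1 * W 0 2 * W 1 2) (n := 2) two_pos
  have off_diag {p q r : ℂ} (hp : p ≠ 0) (hq : q ≠ 0) (h : t ^ 2 = 2 * p * q * r) :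
      r = 2 * (t / (2 * p)) * (t / (2 * q)) := by
    field_simp
    linear_combination -h
  have norm_diag_le {a p q r : ℂ} (hr : r ≠ 0) (h : t ^ 2 = 2 * p * q * r)
      (minor : ‖p * q - a * r‖ = ‖r‖) : ‖a - 2 * (t / (2 * r)) ^ 2‖ ≤ 1 := by
    have factor : p * q - a * r = (2 * (t / (2 * r)) ^ 2 - a) * r := by
      field_simp
      linear_combination -h
    rw [factor, norm_mul, norm_sub_rev] at minor
    exact (mul_eq_right₀ (norm_ne_zero_iff.mpr hr)).mp minor |>.le
  refine ⟨![t / (2 * W 1 2), t / (2 * W 0 2), t / (2 * W 0 1)], .of_isSymm hs ?_ ?_⟩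
  · simpa [Fin.forall_fin_succ] using ⟨⟨off_diag h12 h02 (by linear_combination ht),
      off_diag h12 h01 (by linear_combination ht)⟩, off_diag h02 h01 (by linear_combination ht)⟩
  · simp only [Fin.forall_fin_succ, Fin.forall_fin_zero]
    exact ⟨norm_diag_le h12 ht minor12, norm_diag_le h02 (by linear_combination ht) minor02,
      norm_diag_le h01 (by linear_combination ht) minor01, trivial⟩

theorem apply_eq_zero_or_of_apply_eq_zero {W : Matrix (Fin 3) (Fin 3) ℂ}
    (hW : W ∈ unitaryGroup (Fin 3) ℂ) (hs : W.IsSymm) {i j k : Fin 3}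
    (hij : i ≠ j) (hik : i ≠ k) (hjk : j ≠ k) (h : W i j = 0) : W i k = 0 ∨ W j k = 0 := by
  have row_orthogonal : ∑ l, W i l * star (W j l) = 0 := by
    simpa [mul_apply, hij] using congr_fun₂ (mem_unitaryGroup_iff.mp hW) i j
  rw [Finset.sum_eq_single k (fun l _ hl => ?_) (by simp)] at row_orthogonal
  · simpa using row_orthogonal
  · obtain rfl | rfl : l = i ∨ l = j := by grind
    · simp [hs.apply l j, h]
    · simp [h]

theorem exists_row_eq_zero_of_apply_eq_zero {W : Matrix (Fin 3) (Fin 3) ℂ}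
    (hW : W ∈ unitaryGroup (Fin 3) ℂ) (hs : W.IsSymm) {i j : Fin 3} (hij : i ≠ j)
    (h : W i j = 0) : ∃ l, ∀ m, W l (Fin.succAbove l m) = 0 := by
  obtain ⟨k, hik, hjk⟩ : ∃ k, i ≠ k ∧ j ≠ k := by
    clear h
    decide +revert
  obtain hk | hk := apply_eq_zero_or_of_apply_eq_zero hW hs hij hik hjk h
  · refine ⟨i, fun m => ?_⟩
    obtain hm | hm : i.succAbove m = j ∨ i.succAbove m = k := by grind [Fin.succAbove_ne i m]
    · rw [hm, h]
    · rw [hm, hk]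
  · refine ⟨j, fun m => ?_⟩
    obtain hm | hm : j.succAbove m = i ∨ j.succAbove m = k := by grind [Fin.succAbove_ne j m]
    · rw [hm, hs.apply, h]
    · rw [hm, hk]

theorem exists_isRankOneSplitting_fin_three {W : Matrix (Fin 3) (Fin 3) ℂ}
    (hW : W ∈ unitaryGroup (Fin 3) ℂ) (hs : W.IsSymm) : ∃ z, IsRankOneSplitting W z := by
  by_cases h : ∃ i j, i ≠ j ∧ W i j = 0
  · obtain ⟨i, j, hij, hz⟩ := h
    obtain ⟨l, hl⟩ := exists_row_eq_zero_of_apply_eq_zero hW hs hij hz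
    exact exists_isRankOneSplitting_of_row_eq_zero hW hs hl
  · push Not at h
    exact exists_isRankOneSplitting_of_ne_zero hW hs (h 0 1 (by decide)) (h 0 2 (by decide))
      (h 1 2 (by decide))

/-- The real matrix `R` with its rows multiplied by the phases `φ`. The matrices exhibited below to
attain the minima have this form. -/
def phasedRows {m n : Type*} (φ : n → ℂ) (R : Matrix n m ℝ) : Matrix n m ℂ :=
  of fun i k => φ i * R i k

theorem phasedRows_mul_conjTranspose {m n : Type*} [Fintype m] [DecidableEq n] {φ : n → ℂ}
    (hφ : ∀ i, ‖φ i‖ = 1) {R : Matrix n m ℝ} (hR : R * Rᵀ = 1) :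
    phasedRows φ R * (phasedRows φ R)ᴴ = 1 := by
  ext i j
  have row_orthonormal : ∑ k, (R i k * R j k : ℂ) = if i = j then 1 else 0 := by
    simpa [mul_apply, one_apply, apply_ite] using congr_arg ((↑) : ℝ → ℂ) (congr_fun₂ hR i j)
  calc (phasedRows φ R * (phasedRows φ R)ᴴ) i j
      = φ i * star (φ j) * ∑ k, (R i k * R j k : ℂ) := by
        simp only [mul_apply, conjTranspose_apply, phasedRows, of_apply, star_mul',
          Complex.star_def, Complex.conj_ofReal, Finset.mul_sum]
        exact Finset.sum_congr rfl fun k _ => by ring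
    _ = (1 : Matrix n n ℂ) i j := by
        rw [row_orthonormal, one_apply]
        split_ifs with hij
        · simp [hij, Complex.mul_conj', hφ]
        · rw [mul_zero]

section DiagonalCongruence

variable {m n : Type*} [Fintype n] [DecidableEq n]

theorem transpose_mul_diagonal_mul_apply_self_s14 (d : n → ℂ) (V : Matrix n m ℂ) (k : m) :
    (Vᵀ * diagonal d * V) k k = ∑ i, d i * V i k ^ 2 := by
  rw [mul_apply]
  refine Finset.sum_congr rfl fun i _ => ?_
  rw [mul_diagonal, transpose_apply]
  ring

variable [Fintype m]

theorem dotProduct_transpose_mul_diagonal_mul_mulVec (d : n → ℂ) (V : Matrix n m ℂ) (z : m → ℂ) :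
    z ⬝ᵥ (Vᵀ * diagonal d * V) *ᵥ z = ∑ i, d i * (V *ᵥ z) i ^ 2 := by
  rw [← mulVec_mulVec, ← mulVec_mulVec, dotProduct_mulVec, vecMul_transpose]
  refine Finset.sum_congr rfl fun i _ => ?_
  rw [mulVec_diagonal]
  ring

theorem norm_dotProduct_transpose_mul_diagonal_mul_mulVec_le {d : n → ℂ} {s : ℝ}
    (hd : ∀ i, ‖d i‖ ≤ s) {V : Matrix n n ℂ} (hV : V ∈ unitaryGroup n ℂ) (z : n → ℂ) :
    ‖z ⬝ᵥ (Vᵀ * diagonal d * V) *ᵥ z‖ ≤ s * ∑ i, ‖z i‖ ^ 2 := by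
  rw [dotProduct_transpose_mul_diagonal_mul_mulVec, ← sum_norm_sq_mulVec_of_mem_unitaryGroup hV,
    Finset.mul_sum]
  refine norm_sum_le_of_le _ fun i _ => ?_
  rw [norm_mul, norm_pow]
  gcongr
  exact hd i

theorem trace_star_mul_transpose_mul {V : Matrix n n ℂ} (hV : V ∈ unitaryGroup n ℂ)
    (D : Matrix n n ℂ) : (star V * (star V)ᵀ * (Vᵀ * D * V)).trace = D.trace := by
  have transpose_cancel : (star V)ᵀ * Vᵀ = 1 := by
    rw [← transpose_mul, mem_unitaryGroup_iff.mp hV, transpose_one]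
  calc (star V * (star V)ᵀ * (Vᵀ * D * V)).trace
      = (star V * ((star V)ᵀ * Vᵀ) * D * V).trace := by simp only [Matrix.mul_assoc]
    _ = D.trace := by
        rw [transpose_cancel, Matrix.mul_one, trace_mul_comm, ← Matrix.mul_assoc,
          mem_unitaryGroup_iff.mp hV, Matrix.one_mul]

theorem norm_sum_le_two_mul_add_sum_norm_diag {d : Fin 3 → ℂ} {s : ℝ} (hd : ∀ i, ‖d i‖ ≤ s)
    {V : Matrix (Fin 3) (Fin 3) ℂ} (hV : V ∈ unitaryGroup (Fin 3) ℂ) :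
    ‖∑ i, d i‖ ≤ 2 * s + ∑ k, ‖(Vᵀ * diagonal d * V) k k‖ := by
  have hW : star V * (star V)ᵀ ∈ unitaryGroup (Fin 3) ℂ :=
    mul_mem (Unitary.star_mem hV) (transpose_mem_unitaryGroup_iff.mpr (Unitary.star_mem hV))
  obtain ⟨z, hz⟩ := exists_isRankOneSplitting_fin_three hW
    (by rw [IsSymm, transpose_mul, transpose_transpose])
  have hs : 0 ≤ s := (norm_nonneg _).trans (hd 0)
  calc ‖∑ i, d i‖ = ‖(star V * (star V)ᵀ * (Vᵀ * diagonal d * V)).trace‖ := by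
        rw [trace_star_mul_transpose_mul hV, trace_diagonal]
    _ ≤ 2 * ‖z ⬝ᵥ (Vᵀ * diagonal d * V) *ᵥ z‖ + ∑ k, ‖(Vᵀ * diagonal d * V) k k‖ :=
        hz.norm_trace_mul_le _
    _ ≤ 2 * s + ∑ k, ‖(Vᵀ * diagonal d * V) k k‖ := by
        gcongr
        exact (norm_dotProduct_transpose_mul_diagonal_mul_mulVec_le hd hV z).trans
          (mul_le_of_le_one_right hs (hz.sum_norm_sq_le_one hW))

end DiagonalCongruence

section ConcurrenceValues

variable {m n : Type*} [Fintype m] [Fintype n] [DecidableEq n]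

/-- The values `∑ |(Tᵀ A T) k k|` over right-unitary `T` with columns indexed by `m`. When `A` is
Wootters' matrix of overlaps `⟨vᵢ|ṽⱼ⟩` of a mixed state, these are the average concurrences of its
decompositions into `m` pure states. -/
def concurrenceValues (A : Matrix n n ℂ) (m : Type*) [Fintype m] : Set ℝ :=
  {c | ∃ T : Matrix n m ℂ, T * Tᴴ = 1 ∧ c = ∑ k, ‖(Tᵀ * A * T) k k‖}

theorem concurrenceValues_subset_congruence {U : Matrix n n ℂ} (hU : U ∈ unitaryGroup n ℂ)
    (A : Matrix n n ℂ) : concurrenceValues A m ⊆ concurrenceValues (Uᵀ * A * U) m := by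
  rintro _ ⟨T, hT, rfl⟩
  have hUT : U * (star U * T) = T := by
    rw [← Matrix.mul_assoc, mem_unitaryGroup_iff.mp hU, Matrix.one_mul]
  refine ⟨star U * T, ?_, ?_⟩
  · calc star U * T * (star U * T)ᴴ = star U * (T * Tᴴ) * U := by
          simp only [star_eq_conjTranspose, conjTranspose_mul, conjTranspose_conjTranspose,
            Matrix.mul_assoc]
      _ = 1 := by rw [hT, Matrix.mul_one, mem_unitaryGroup_iff'.mp hU]
  · have : (star U * T)ᵀ * (Uᵀ * A * U) * (star U * T)
        = (U * (star U * T))ᵀ * A * (U * (star U * T)) := by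
      simp only [transpose_mul U, Matrix.mul_assoc]
    rw [this, hUT]

theorem concurrenceValues_congruence {U : Matrix n n ℂ} (hU : U ∈ unitaryGroup n ℂ)
    (A : Matrix n n ℂ) : concurrenceValues (Uᵀ * A * U) m = concurrenceValues A m := by
  refine (concurrenceValues_subset_congruence hU A).antisymm' ?_
  have h := concurrenceValues_subset_congruence (m := m) (Unitary.star_mem hU) (Uᵀ * A * U)
  have cancel : U * star U = 1 := mem_unitaryGroup_iff.mp hU
  have : (star U)ᵀ * (Uᵀ * A * U) * star U = (U * star U)ᵀ * A * (U * star U) := by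
    simp only [transpose_mul U, Matrix.mul_assoc]
  rwa [this, cancel, transpose_one, Matrix.one_mul, Matrix.mul_one] at h

theorem sum_norm_mem_concurrenceValues_diagonal (d : n → ℂ) {φ : n → ℂ} (hφ : ∀ i, ‖φ i‖ = 1)
    {R : Matrix n m ℝ} (hR : R * Rᵀ = 1) :
    ∑ k, ‖∑ i, d i * φ i ^ 2 * (R i k : ℂ) ^ 2‖ ∈ concurrenceValues (diagonal d) m := by
  refine ⟨phasedRows φ R, phasedRows_mul_conjTranspose hφ hR, ?_⟩
  simp only [transpose_mul_diagonal_mul_apply_self_s14, phasedRows, of_apply, mul_pow, mul_assoc]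

theorem sum_sum_mul_sq_of_mul_transpose_eq_one {R : Matrix n m ℝ} (hR : R * Rᵀ = 1) (x : n → ℝ) :
    ∑ k, ∑ i, x i * R i k ^ 2 = ∑ i, x i := by
  rw [Finset.sum_comm]
  refine Finset.sum_congr rfl fun i _ => ?_
  have row_norm : ∑ k, R i k ^ 2 = 1 := by
    simpa [mul_apply, sq] using congr_fun₂ hR i i
  rw [← Finset.mul_sum, row_norm, mul_one]

end ConcurrenceValues

theorem exists_sq_add_sq_eq_one_and_mul_sq_eq {a b : ℝ} (ha : 0 ≤ a) (hb : 0 ≤ b) :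
    ∃ x y : ℝ, x ^ 2 + y ^ 2 = 1 ∧ a * x ^ 2 = b * y ^ 2 := by
  obtain ⟨θ, hθ⟩ := mem_range_of_exists_le_of_exists_ge (c := 0)
    (f := fun θ : ℝ => a * Real.cos θ ^ 2 - b * Real.sin θ ^ 2) (by fun_prop)
    ⟨Real.pi / 2, by simpa using hb⟩ ⟨0, by simpa using ha⟩
  exact ⟨Real.cos θ, Real.sin θ, Real.cos_sq_add_sin_sq θ, sub_eq_zero.mp hθ⟩

theorem exists_orthogonal_forall_diag_nonneg {a b c : ℝ} (ha : 0 ≤ a) (hb : 0 ≤ b)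
    (h : a ≤ b + c) : ∃ R : Matrix (Fin 3) (Fin 3) ℝ,
      R * Rᵀ = 1 ∧ ∀ k, 0 ≤ ∑ i, ![-a, b, c] i * R i k ^ 2 := by
  obtain ⟨x, y, hxy, hab⟩ := exists_sq_add_sq_eq_one_and_mul_sq_eq ha hb
  obtain ⟨r, hr⟩ : ∃ r : ℝ, r ^ 2 = 1 / 2 := ⟨√(1 / 2), Real.sq_sqrt (by norm_num)⟩
  -- A rotation makes the first diagonal entry vanish, and one by `π / 4` averages the other two.
  refine ⟨!![x, -(r * y), r * y; y, r * x, -(r * x); 0, r, r], ?_, ?_⟩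
  · ext i j
    fin_cases i <;> fin_cases j <;> simp [mul_apply, Fin.sum_univ_three] <;> grind
  · have average : -(a * (r * y) ^ 2) + b * (r * x) ^ 2 + c * r ^ 2 = (b + c - a) / 2 := by
      linear_combination (b * x ^ 2 + c - a * y ^ 2) * hr + (b - a) / 2 * hxy + hab / 2
    have average_nonneg : 0 ≤ -(a * (r * y) ^ 2) + b * (r * x) ^ 2 + c * r ^ 2 := by linarith
    simpa [Fin.forall_fin_succ, Fin.sum_univ_three, hab] using average_nonneg

theorem exists_norm_add_mul_eq {a b c : ℝ} (h₁ : |a - b| ≤ c) (h₂ : c ≤ a + b) :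
    ∃ u : ℂ, ‖u‖ = 1 ∧ ‖a + b * u‖ = c := by
  obtain ⟨θ, hθ⟩ := mem_range_of_exists_le_of_exists_ge (c := c)
    (f := fun θ : ℝ => ‖(a + b * Complex.exp (θ * Complex.I) : ℂ)‖) (by fun_prop)
    ⟨Real.pi, by simpa [← sub_eq_add_neg, ← Complex.ofReal_sub] using h₁⟩
    ⟨0, by simpa [← Complex.ofReal_add] using h₂.trans (le_abs_self _)⟩
  exact ⟨_, Complex.norm_exp_ofReal_mul_I θ, hθ⟩

theorem exists_norm_eq_one_and_sq_eq {w : ℂ} (hw : ‖w‖ = 1) : ∃ v : ℂ, ‖v‖ = 1 ∧ v ^ 2 = w := by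
  obtain ⟨v, rfl⟩ := IsAlgClosed.exists_pow_nat_eq w two_pos
  rw [norm_pow] at hw
  exact ⟨v, (pow_eq_one_iff_of_nonneg (norm_nonneg v) two_ne_zero).mp hw, rfl⟩

theorem exists_phases_sum_mul_sq_eq_zero {a b c : ℝ} (h₁ : |a - b| ≤ c) (h₂ : c ≤ a + b) :
    ∃ φ : Fin 3 → ℂ, (∀ i, ‖φ i‖ = 1) ∧ ∑ i, (![a, b, c] i : ℂ) * φ i ^ 2 = 0 := by
  obtain ⟨u, hu, huc⟩ := exists_norm_add_mul_eq h₁ h₂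
  obtain ⟨v, hv, hvu⟩ := exists_norm_eq_one_and_sq_eq hu
  obtain ⟨w, hw, hwu⟩ := exists_norm_eq_one_and_sq_eq
    (w := -Complex.exp (Complex.arg (a + b * u) * Complex.I))
    (by rw [norm_neg, Complex.norm_exp_ofReal_mul_I])
  refine ⟨![1, v, w], by simp [Fin.forall_fin_succ, hv, hw], ?_⟩
  have polar := Complex.norm_mul_exp_arg_mul_I (a + b * u)
  rw [huc] at polar
  have unfolded : ∑ i, (![a, b, c] i : ℂ) * ![1, v, w] i ^ 2 = a + b * v ^ 2 + c * w ^ 2 := by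
    simp [Fin.sum_univ_three]
  rw [unfolded, hvu, hwu]
  linear_combination -polar

theorem isLeast_concurrenceValues_diagonal_three {σ : Fin 3 → ℝ} (hσ : Antitone σ)
    (h : σ 0 ≤ σ 1 + σ 2) :
    IsLeast (concurrenceValues (diagonal fun i => (σ i : ℂ)) (Fin 3)) (σ 1 + σ 2 - σ 0) := by
  have h01 : σ 1 ≤ σ 0 := hσ (by decide)
  have h12 : σ 2 ≤ σ 1 := hσ (by decide)
  constructor
  · obtain ⟨R, hR, hdiag⟩ := exists_orthogonal_forall_diag_nonneg (a := σ 0) (b := σ 1) (c := σ 2)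
      (by linarith) (by linarith) h
    have hsum := sum_sum_mul_sq_of_mul_transpose_eq_one hR ![-σ 0, σ 1, σ 2]
    have hmem := sum_norm_mem_concurrenceValues_diagonal (fun i => (σ i : ℂ))
      (φ := ![Complex.I, 1, 1]) (by simp [Fin.forall_fin_succ]) hR
    have entry_eq (k : Fin 3) : ‖∑ i, (σ i : ℂ) * ![Complex.I, 1, 1] i ^ 2 * (R i k : ℂ) ^ 2‖
        = ∑ i, ![-σ 0, σ 1, σ 2] i * R i k ^ 2 := by
      rw [← Real.norm_of_nonneg (hdiag k), ← Complex.norm_real]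
      simp [Fin.sum_univ_three]
    have sum_eq : ∑ i, ![-σ 0, σ 1, σ 2] i = σ 1 + σ 2 - σ 0 := by
      rw [Fin.sum_univ_three]
      change -σ 0 + σ 1 + σ 2 = σ 1 + σ 2 - σ 0
      ring
    simpa only [entry_eq, hsum, sum_eq] using hmem
  · rintro _ ⟨T, hT, rfl⟩
    have hd (i : Fin 3) : ‖(σ i : ℂ)‖ ≤ σ 0 := by
      have h2i : σ 2 ≤ σ i := hσ (Fin.le_last i)
      rw [Complex.norm_real, Real.norm_of_nonneg (by linarith)]
      exact hσ (Fin.zero_le i)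
    have lower := norm_sum_le_two_mul_add_sum_norm_diag hd (mem_unitaryGroup_iff.mpr hT)
    rw [← Complex.ofReal_sum, Complex.norm_real, Fin.sum_univ_three] at lower
    linarith [Real.le_norm_self (σ 0 + σ 1 + σ 2)]

theorem isLeast_concurrenceValues_diagonal_four {σ : Fin 3 → ℝ} (hσ : Antitone σ)
    (h : σ 0 ≤ σ 1 + σ 2) :
    IsLeast (concurrenceValues (diagonal fun i => (σ i : ℂ)) (Fin 4)) 0 := by
  have h01 : σ 1 ≤ σ 0 := hσ (by decide)
  have h12 : σ 2 ≤ σ 1 := hσ (by decide)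
  constructor
  · obtain ⟨φ, hφ, hsum⟩ := exists_phases_sum_mul_sq_eq_zero (a := σ 0) (b := σ 1) (c := σ 2)
      (abs_le.mpr ⟨by linarith, by linarith⟩) (by linarith)
    set R : Matrix (Fin 3) (Fin 4) ℝ :=
      (1 / 2 : ℝ) • !![1, 1, 1, 1; 1, -1, 1, -1; 1, 1, -1, -1] with hRdef
    have hR : R * Rᵀ = 1 := by
      ext i j
      fin_cases i <;> fin_cases j <;> simp [hRdef, mul_apply, Fin.sum_univ_four] <;> norm_num
    have hRsq (i k) : (R i k : ℂ) ^ 2 = 1 / 4 := by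
      fin_cases i <;> fin_cases k <;> simp [hRdef] <;> norm_num
    have hmem := sum_norm_mem_concurrenceValues_diagonal (fun i => (σ i : ℂ)) hφ hR
    have hsum' : ∑ i, (σ i : ℂ) * φ i ^ 2 = 0 := by simpa [Fin.sum_univ_three] using hsum
    simpa only [hRsq, ← Finset.sum_mul, hsum', zero_mul, norm_zero, Finset.sum_const_zero]
      using hmem
  · rintro _ ⟨T, -, rfl⟩
    positivity

/-- Cardinality jump for the concurrence of rank-3 states: for a complex symmetric
3×3 matrix `A` with singular values `σ₁ ≥ σ₂ ≥ σ₃` satisfying `σ₁ < σ₂ + σ₃`, the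
minimum of `∑_k |(Tᵀ A T)_{kk}|` over unitary 3×3 matrices `T` equals
`|σ₁ − σ₂ − σ₃| > 0`, while the minimum over right-unitary 3×4 matrices equals 0. -/
theorem concurrence_cardinality_jump
    (A : Matrix (Fin 3) (Fin 3) ℂ) (hsymm : Aᵀ = A)
    (σ : Fin 3 → ℝ) (hσ0 : ∀ i, 0 ≤ σ i) (hσmono : Antitone σ)
    (U : Matrix (Fin 3) (Fin 3) ℂ) (hU : U ∈ Matrix.unitaryGroup (Fin 3) ℂ)
    (hTakagi : A = Uᵀ * Matrix.diagonal (fun i => (σ i : ℂ)) * U)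
    (htri : σ 0 < σ 1 + σ 2) :
    IsLeast {c : ℝ | ∃ T : Matrix (Fin 3) (Fin 3) ℂ,
        T ∈ Matrix.unitaryGroup (Fin 3) ℂ ∧ c = ∑ k, ‖(Tᵀ * A * T) k k‖}
      |σ 0 - σ 1 - σ 2| ∧
    0 < |σ 0 - σ 1 - σ 2| ∧
    IsLeast {c : ℝ | ∃ T : Matrix (Fin 3) (Fin 4) ℂ,
        T * Tᴴ = 1 ∧ c = ∑ k, ‖(Tᵀ * A * T) k k‖} 0 := by
  have hpos : 0 < σ 1 + σ 2 - σ 0 := by linarith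
  rw [show |σ 0 - σ 1 - σ 2| = σ 1 + σ 2 - σ 0 by rw [abs_of_neg (by linarith)]; ring]
  simp only [mem_unitaryGroup_iff, star_eq_conjTranspose]
  change IsLeast (concurrenceValues A (Fin 3)) _ ∧ _ ∧ IsLeast (concurrenceValues A (Fin 4)) _
  rw [hTakagi, concurrenceValues_congruence hU, concurrenceValues_congruence hU]
  exact ⟨isLeast_concurrenceValues_diagonal_three hσmono htri.le, hpos,
    isLeast_concurrenceValues_diagonal_four hσmono htri.le⟩
end
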